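/- Let n ≥ 2 be an integer, α ∈ (1,n), β > 0 and A > 0, and assume α < β. Then there exists a mass m₁ = m₁(n,α,β,A) > 0 such that for every m > m₁, the ball B[m] of volume m centered at 0 is the unique minimizer at mass m of E_{α,β,A}: any minimizer E at mass m coincides with B[m] up to a Lebesgue-null set. -/

import Mathlib

open MeasureTheory Metric Filter ENNReal

noncomputable section

/-- The Lebesgue density of `E` at `x` equals `d`. -/
def HasDensity {n : ℕ} (E : Set (EuclideanSpace ℝ (Fin n)))
    (x : EuclideanSpace ℝ (Fin n)) (d : ℝ) : Prop :=
  Filter.Tendsto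
    (fun r : ℝ => (volume (E ∩ Metric.ball x r)).toReal / (volume (Metric.ball x r)).toReal)
    (nhdsWithin 0 (Set.Ioi 0)) (nhds d)

/-- The essential boundary of `E`: points where `E` has neither density 0 nor density 1. -/
def essBoundary {n : ℕ} (E : Set (EuclideanSpace ℝ (Fin n))) :
    Set (EuclideanSpace ℝ (Fin n)) :=
  {x | ¬ HasDensity E x 0 ∧ ¬ HasDensity E x 1}

/-- The perimeter of `E`: the `(n-1)`-dimensional Hausdorff measure of the essential
boundary of `E`. -/
def perimeter {n : ℕ} (E : Set (EuclideanSpace ℝ (Fin n))) : ℝ≥0∞ :=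
  μH[(n : ℝ) - 1] (essBoundary E)

/-- The Riesz energy `V_α(E) = ∫_{E×E} |x-y|^(α-n) dx dy`. -/
def rieszEnergy {n : ℕ} (α : ℝ) (E : Set (EuclideanSpace ℝ (Fin n))) : ℝ≥0∞ :=
  ∫⁻ x in E, ∫⁻ y in E, ENNReal.ofReal (‖x - y‖ ^ (α - (n : ℝ)))

/-- The potential energy `U_{β,A}(E) = A ∫_E |x|^β dx`. -/
def potEnergy {n : ℕ} (β A : ℝ) (E : Set (EuclideanSpace ℝ (Fin n))) : ℝ≥0∞ :=
  ∫⁻ x in E, ENNReal.ofReal (A * ‖x‖ ^ β)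

/-- The total energy `E_{α,β,A} = P + V_α + U_{β,A}`. -/
def totalEnergy {n : ℕ} (α β A : ℝ) (E : Set (EuclideanSpace ℝ (Fin n))) : ℝ≥0∞ :=
  perimeter E + rieszEnergy α E + potEnergy β A E

/-- `E` is a minimizer of `E_{α,β,A}` at mass `m`. -/
def IsMinimizer {n : ℕ} (α β A m : ℝ) (E : Set (EuclideanSpace ℝ (Fin n))) : Prop :=
  MeasurableSet E ∧ volume E = ENNReal.ofReal m ∧
    ∀ F : Set (EuclideanSpace ℝ (Fin n)), MeasurableSet F → volume F = ENNReal.ofReal m →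
      totalEnergy α β A E ≤ totalEnergy α β A F

/-- The unit ball of `ℝⁿ` centered at the origin. -/
def unitBall (n : ℕ) : Set (EuclideanSpace ℝ (Fin n)) := Metric.ball 0 1

/-- `B[m]`: the open ball centered at `0` with volume `m`. -/
def ballOfVolume (n : ℕ) (m : ℝ) : Set (EuclideanSpace ℝ (Fin n)) :=
  Metric.ball 0 ((m / (volume (unitBall n)).toReal) ^ (1 / (n : ℝ)))

/-!
Let `B` be the ball of radius `R` and volume `|E|`, and let `D` be the integral of `||x| - R|`
over the symmetric difference of `E` and `B`. Up to multiples of `D`, the ball is optimal for each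
of the three energies.
* `U(B) + A R ^ (β - 1) D ≤ U(E)`: exchange mass at level `A R ^ β` and use `β ≥ 1`.
* `V(B) ≤ V(E) + C₂ R ^ (α - 1) D`: the Riesz kernel is a superposition of Gaussians, hence positive
  definite, so `2 ⟨E, B⟩ ≤ V(E) + V(B)`, and the potential of `B` is radial with Lipschitz constant
  `O(R ^ (α - 1))`.
* `P(B) ≤ P(E) + C₁ R ^ (-2) D`: calibrate with the field `x / |x|`, whose divergence is truncated
  near the origin. In polar coordinates this only needs that almost every ray leaving a point of `E`
  meets the essential boundary of `E` further out, and that the radial projection to a sphere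
  contracts the Hausdorff measure.

Since `β > α`, for large `R` the gain `A R ^ (β - 1)` exceeds the two losses by more than one, so
the energy of `E` exceeds that of `B` by at least `D`, and `D = 0` forces `E = B` almost everywhere.
-/

section Exchange

variable {X : Type*} [MeasurableSpace X] {μ : Measure X} {E B : Set X}

theorem lintegral_symmDiff (hE : MeasurableSet E) (hB : MeasurableSet B) (f : X → ℝ≥0∞) :
    ∫⁻ x in symmDiff E B, f x ∂μ = ∫⁻ x in E \ B, f x ∂μ + ∫⁻ x in B \ E, f x ∂μ := by
  rw [Set.symmDiff_def, lintegral_union (hB.diff hE) disjoint_sdiff_sdiff]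

theorem bathtub_lintegral_symmDiff_le (hE : MeasurableSet E) (hB : MeasurableSet B)
    (hEB : μ E = μ B) (hfin : μ B ≠ ∞) {f e k : X → ℝ≥0∞} (hf : Measurable f) {c : ℝ≥0∞}
    (hc : c ≠ ∞) (h_in : ∀ x ∈ B, f x + k x ≤ c + e x) (h_out : ∀ x ∉ B, c + k x ≤ f x + e x) :
    ∫⁻ x in B, f x ∂μ + ∫⁻ x in symmDiff E B, k x ∂μ ≤
      ∫⁻ x in E, f x ∂μ + ∫⁻ x in symmDiff E B, e x ∂μ := by
  have hvol : μ (B \ E) = μ (E \ B) :=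
    measure_sdiff_symm hB.nullMeasurableSet hE.nullMeasurableSet hEB.symm
      (ne_top_of_le_ne_top hfin (measure_mono Set.inter_subset_left))
  have hq : c * μ (E \ B) ≠ ∞ :=
    ENNReal.mul_ne_top hc (hvol ▸ ne_top_of_le_ne_top hfin (measure_mono Set.sdiff_subset))
  have h_lost : ∫⁻ x in B \ E, f x ∂μ + ∫⁻ x in B \ E, k x ∂μ ≤
      c * μ (E \ B) + ∫⁻ x in B \ E, e x ∂μ := by
    rw [← lintegral_add_left hf, ← hvol, ← setLIntegral_const,
      ← lintegral_add_left measurable_const]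
    exact setLIntegral_mono' (hB.diff hE) fun x hx => h_in x hx.1
  have h_gained : c * μ (E \ B) + ∫⁻ x in E \ B, k x ∂μ ≤
      ∫⁻ x in E \ B, f x ∂μ + ∫⁻ x in E \ B, e x ∂μ := by
    rw [← lintegral_add_left hf, ← setLIntegral_const, ← lintegral_add_left measurable_const]
    exact setLIntegral_mono' (hE.diff hB) fun x hx => h_out x hx.2
  rw [lintegral_symmDiff hE hB, lintegral_symmDiff hE hB, ← lintegral_inter_add_sdiff f B hE,
    ← lintegral_inter_add_sdiff f E hB, Set.inter_comm E B, ← ENNReal.add_le_add_iff_left hq]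
  generalize c * μ (E \ B) = q at *
  calc
    _ = ∫⁻ x in B ∩ E, f x ∂μ + ((∫⁻ x in B \ E, f x ∂μ + ∫⁻ x in B \ E, k x ∂μ) +
          (q + ∫⁻ x in E \ B, k x ∂μ)) := by ring
    _ ≤ ∫⁻ x in B ∩ E, f x ∂μ + ((q + ∫⁻ x in B \ E, e x ∂μ) +
          (∫⁻ x in E \ B, f x ∂μ + ∫⁻ x in E \ B, e x ∂μ)) := by gcongr
    _ = _ := by ring

end Exchange

section RadialAsymmetry

variable {V : Type*} [NormedAddCommGroup V] [MeasureSpace V]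

/-- The integral of `|‖x‖ - R|` over the symmetric difference of `E` and the centered ball of
radius `R`; it measures how far `E` is from that ball. -/
def radialAsymmetry (R : ℝ) (E : Set V) : ℝ≥0∞ :=
  ∫⁻ x in symmDiff E (ball 0 R), ENNReal.ofReal |‖x‖ - R|

theorem lintegral_const_mul_abs_norm_sub {c : ℝ} (hc : 0 ≤ c) (R : ℝ)
    (E : Set V) :
    ∫⁻ x in symmDiff E (ball 0 R), ENNReal.ofReal (c * |‖x‖ - R|) =
      ENNReal.ofReal c * radialAsymmetry R E := by
  simp_rw [radialAsymmetry, ENNReal.ofReal_mul hc]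
  exact lintegral_const_mul' _ _ ENNReal.ofReal_ne_top

end RadialAsymmetry

theorem volume_symmDiff_ball_eq_zero_of_radialAsymmetry_eq_zero {V : Type*}
    [NormedAddCommGroup V] [NormedSpace ℝ V] [FiniteDimensional ℝ V] [MeasureSpace V]
    [BorelSpace V] [Measure.IsAddHaarMeasure (volume : Measure V)] {R : ℝ} (hR : R ≠ 0)
    {E : Set V} (h : radialAsymmetry R E = 0) : volume (symmDiff E (ball 0 R)) = 0 := by
  rw [radialAsymmetry, lintegral_eq_zero_iff (by fun_prop)] at h
  have h_sphere : ∀ᵐ x ∂(volume.restrict (symmDiff E (ball (0 : V) R))), x ∉ sphere (0 : V) R :=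
    ae_restrict_of_ae (measure_eq_zero_iff_ae_notMem.1 (Measure.addHaar_sphere_of_ne_zero _ 0 hR))
  rw [← Measure.restrict_eq_zero, ← ae_eq_bot, ← eventually_false_iff_eq_bot]
  filter_upwards [h, h_sphere] with x hx hxR
  refine hxR (mem_sphere_zero_iff_norm.2 (sub_eq_zero.1 (abs_eq_zero.1 ?_)))
  exact le_antisymm (ENNReal.ofReal_eq_zero.1 hx) (abs_nonneg _)

section Potential

theorem mul_abs_sub_add_le_rpow {β R t : ℝ} (hβ : 1 ≤ β) (hR : 0 < R) (hRt : R ≤ t) :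
    R ^ β + R ^ (β - 1) * |t - R| ≤ t ^ β := by
  have ht : 0 < t := hR.trans_le hRt
  have h_mono : R ^ (β - 1) * t ≤ t ^ (β - 1) * t := by gcongr
  have h_split (s : ℝ) (hs : 0 < s) : s ^ β = s ^ (β - 1) * s := by
    rw [← Real.rpow_add_one hs.ne', sub_add_cancel]
  rw [abs_of_nonneg (by linarith), h_split R hR, h_split t ht]
  linarith

theorem rpow_add_mul_abs_sub_le {β R t : ℝ} (hβ : 1 ≤ β) (ht : 0 ≤ t) (htR : t < R) :
    t ^ β + R ^ (β - 1) * |t - R| ≤ R ^ β := by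
  have hβ' : (β - 1) + 1 ≠ 0 := by linarith
  have h_mono : t ^ (β - 1) * t ≤ R ^ (β - 1) * t := by gcongr
  have h_split (s : ℝ) (hs : 0 ≤ s) : s ^ β = s ^ (β - 1) * s := by
    rw [← Real.rpow_add_one' hs hβ', sub_add_cancel]
  rw [abs_of_neg (by linarith), h_split R (by linarith), h_split t ht]
  linarith

theorem potEnergy_ball_ne_top {n : ℕ} {β A : ℝ} (hβ : 0 ≤ β) (hA : 0 ≤ A) (R : ℝ) :
    potEnergy β A (ball (0 : EuclideanSpace ℝ (Fin n)) R) ≠ ∞ := by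
  refine (setLIntegral_lt_top_of_le_nnreal measure_ball_lt_top.ne
    ⟨(A * R ^ β).toNNReal, fun x hx => ENNReal.ofReal_le_ofReal ?_⟩).ne
  have := (mem_ball_zero_iff.1 hx).le
  gcongr

theorem potEnergy_ball_add_le {n : ℕ} {β A R : ℝ} (hβ : 1 ≤ β) (hA : 0 ≤ A) (hR : 0 < R)
    {E : Set (EuclideanSpace ℝ (Fin n))} (hE : MeasurableSet E)
    (hER : volume E = volume (ball (0 : EuclideanSpace ℝ (Fin n)) R)) :
    potEnergy β A (ball (0 : EuclideanSpace ℝ (Fin n)) R) +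
      ENNReal.ofReal (A * R ^ (β - 1)) * radialAsymmetry R E ≤ potEnergy β A E := by
  have hbath := bathtub_lintegral_symmDiff_le (c := ENNReal.ofReal (A * R ^ β)) (e := 0)
    (f := fun x : EuclideanSpace ℝ (Fin n) => ENNReal.ofReal (A * ‖x‖ ^ β))
    (k := fun x => ENNReal.ofReal (A * R ^ (β - 1) * |‖x‖ - R|))
    hE measurableSet_ball hER measure_ball_lt_top.ne (by fun_prop) ENNReal.ofReal_ne_top
    (fun x hx => ?_) (fun x hx => ?_)
  · rw [lintegral_const_mul_abs_norm_sub (by positivity)] at hbath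
    simpa only [potEnergy, Pi.zero_apply, lintegral_zero, add_zero] using hbath
  · rw [Pi.zero_apply, add_zero, ← ENNReal.ofReal_add (by positivity) (by positivity), mul_assoc,
      ← mul_add]
    have := rpow_add_mul_abs_sub_le hβ (norm_nonneg x) (mem_ball_zero_iff.1 hx)
    gcongr
  · rw [Pi.zero_apply, add_zero, ← ENNReal.ofReal_add (by positivity) (by positivity), mul_assoc,
      ← mul_add]
    have := mul_abs_sub_add_le_rpow hβ hR (not_lt.1 (mt mem_ball_zero_iff.2 hx))
    gcongr

end Potential

section PositiveDefiniteKernel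

variable {X Y : Type*} [MeasurableSpace X] [MeasurableSpace Y]

theorem lintegral_lintegral_lintegral_mul (τ : Measure Y) [SFinite τ] (μ ν : Measure X) [SFinite μ]
    [SFinite ν] {h : Y → X → ℝ≥0∞} (hh : Measurable (Function.uncurry h)) :
    ∫⁻ x, ∫⁻ y, ∫⁻ p, h p x * h p y ∂τ ∂ν ∂μ = ∫⁻ p, (∫⁻ x, h p x ∂μ) * (∫⁻ y, h p y ∂ν) ∂τ := by
  calc
    _ = ∫⁻ x, ∫⁻ p, ∫⁻ y, h p x * h p y ∂ν ∂τ ∂μ :=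
      lintegral_congr fun x => lintegral_lintegral_swap (by fun_prop)
    _ = ∫⁻ x, ∫⁻ p, h p x * ∫⁻ y, h p y ∂ν ∂τ ∂μ :=
      lintegral_congr fun x => lintegral_congr fun p => lintegral_const_mul _ (by fun_prop)
    _ = ∫⁻ p, ∫⁻ x, h p x * ∫⁻ y, h p y ∂ν ∂μ ∂τ := lintegral_lintegral_swap (by fun_prop)
    _ = _ := lintegral_congr fun p => lintegral_mul_const _ (by fun_prop)

theorem two_mul_mul_le_mul_self_add_mul_self (a b : ℝ≥0∞) : 2 * (a * b) ≤ a * a + b * b := by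
  wlog hab : a ≤ b generalizing a b
  · rw [mul_comm a, add_comm]
    exact this b a (le_of_not_ge hab)
  obtain ⟨c, rfl⟩ := le_iff_exists_add.1 hab
  calc
    2 * (a * (a + c)) ≤ 2 * (a * (a + c)) + c * c := le_self_add
    _ = a * a + (a + c) * (a + c) := by ring

theorem two_mul_lintegral_lintegral_le_of_factorization (τ : Measure Y) [SFinite τ]
    (μ ν : Measure X) [SFinite μ] [SFinite ν] {h : Y → X → ℝ≥0∞}
    (hh : Measurable (Function.uncurry h)) :
    2 * ∫⁻ x, ∫⁻ y, ∫⁻ p, h p x * h p y ∂τ ∂ν ∂μ ≤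
      ∫⁻ x, ∫⁻ y, ∫⁻ p, h p x * h p y ∂τ ∂μ ∂μ + ∫⁻ x, ∫⁻ y, ∫⁻ p, h p x * h p y ∂τ ∂ν ∂ν := by
  simp only [lintegral_lintegral_lintegral_mul _ _ _ hh]
  rw [← lintegral_add_left (by fun_prop), ← lintegral_const_mul _ (by fun_prop)]
  exact lintegral_mono fun p => two_mul_mul_le_mul_self_add_mul_self _ _

end PositiveDefiniteKernel

theorem lintegral_Ioi_rpow_mul_exp_neg_mul {a r : ℝ} (ha : 0 < a) (hr : 0 < r) :
    ∫⁻ t in Set.Ioi 0, ENNReal.ofReal (t ^ (a - 1) * Real.exp (-(r * t))) =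
      ENNReal.ofReal ((1 / r) ^ a * Real.Gamma a) := by
  have h_int := Real.integral_rpow_mul_exp_neg_mul_Ioi ha hr
  have := Real.Gamma_pos_of_pos ha
  rw [← h_int, ofReal_integral_eq_lintegral_ofReal]
  · exact .of_integral_ne_zero (by rw [h_int]; positivity)
  · filter_upwards [ae_restrict_mem measurableSet_Ioi] with t (ht : 0 < t)
    simp only [Pi.zero_apply]
    positivity

section RieszKernel

variable {V : Type*} [NormedAddCommGroup V] [InnerProductSpace ℝ V]

theorem norm_sub_sq_add_norm_sub_sq (x y z : V) :
    ‖x - z‖ ^ 2 + ‖y - z‖ ^ 2 = 2 * ‖z - midpoint ℝ x y‖ ^ 2 + ‖x - y‖ ^ 2 / 2 := by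
  have h := parallelogram_law_with_norm ℝ (x - z) (y - z)
  have h_add : x - z + (y - z) = (-2 : ℝ) • (z - midpoint ℝ x y) := by
    rw [midpoint_eq_smul_add]
    norm_num
    module
  rw [sub_sub_sub_cancel_right, h_add, norm_smul, norm_neg, Real.norm_ofNat] at h
  linarith

variable [FiniteDimensional ℝ V] [MeasurableSpace V] [BorelSpace V]

open Module (finrank)

theorem lintegral_exp_mul_exp_neg_mul_sq {t : ℝ} (ht : 0 < t) (x y : V) :
    ∫⁻ z : V, ENNReal.ofReal (Real.exp (-t * ‖x - z‖ ^ 2) * Real.exp (-t * ‖y - z‖ ^ 2)) =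
      ENNReal.ofReal (Real.exp (-(‖x - y‖ ^ 2 / 2 * t)) *
        (Real.pi / (2 * t)) ^ ((finrank ℝ V : ℝ) / 2)) := by
  have h_square (z : V) : Real.exp (-t * ‖x - z‖ ^ 2) * Real.exp (-t * ‖y - z‖ ^ 2) =
      Real.exp (-(‖x - y‖ ^ 2 / 2 * t)) * Real.exp (-(2 * t) * ‖z - midpoint ℝ x y‖ ^ 2) := by
    rw [← Real.exp_add, ← Real.exp_add]
    congr 1
    linear_combination -t * norm_sub_sq_add_norm_sub_sq x y z
  have h_gauss :=
    GaussianFourier.integral_rexp_neg_mul_sq_norm (V := V) (b := 2 * t) (by positivity)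
  have h_int : Integrable (fun v : V => Real.exp (-(2 * t) * ‖v‖ ^ 2)) :=
    .of_integral_ne_zero (by rw [h_gauss]; positivity)
  simp_rw [h_square]
  rw [← ofReal_integral_eq_lintegral_ofReal ((h_int.comp_sub_right _).const_mul _)
      (Eventually.of_forall fun z => by positivity), integral_const_mul,
    integral_sub_right_eq_self (fun v : V => Real.exp (-(2 * t) * ‖v‖ ^ 2)), h_gauss]

/-- The Gaussian factor at the point `z = q.2` and scale `t = q.1` whose products
`gaussianFactor s q x * gaussianFactor s q y`, integrated over `q`, give a multiple of
`‖x - y‖ ^ (-s)`. The power of `t` is the square root of the one needed in the integral. -/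
def gaussianFactor (s : ℝ) (q : ℝ × V) (x : V) : ℝ≥0∞ :=
  ENNReal.ofReal (q.1 ^ ((s / 2 - 1 + finrank ℝ V / 2) / 2) * Real.exp (-q.1 * ‖x - q.2‖ ^ 2))

theorem measurable_gaussianFactor (s : ℝ) :
    Measurable (Function.uncurry (gaussianFactor (V := V) s)) := by
  unfold gaussianFactor Function.uncurry
  fun_prop

theorem lintegral_gaussianFactor_mul (s : ℝ) {t : ℝ} (ht : 0 < t) (x y : V) :
    ∫⁻ z : V, gaussianFactor s (t, z) x * gaussianFactor s (t, z) y =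
      ENNReal.ofReal ((Real.pi / 2) ^ ((finrank ℝ V : ℝ) / 2)) *
        ENNReal.ofReal (t ^ (s / 2 - 1) * Real.exp (-(‖x - y‖ ^ 2 / 2 * t))) := by
  set d : ℝ := (finrank ℝ V : ℝ)
  have h_factor (z : V) : gaussianFactor s (t, z) x * gaussianFactor s (t, z) y =
      ENNReal.ofReal (t ^ (s / 2 - 1 + d / 2)) *
        ENNReal.ofReal (Real.exp (-t * ‖x - z‖ ^ 2) * Real.exp (-t * ‖y - z‖ ^ 2)) := by
    have h_sq : t ^ (s / 2 - 1 + d / 2) =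
        t ^ ((s / 2 - 1 + d / 2) / 2) * t ^ ((s / 2 - 1 + d / 2) / 2) := by
      rw [← Real.rpow_add ht, add_halves]
    rw [gaussianFactor, gaussianFactor, ← ENNReal.ofReal_mul (by positivity),
      ← ENNReal.ofReal_mul (by positivity), h_sq]
    congr 1
    ring
  have h_div : (Real.pi / (2 * t)) ^ (d / 2) = (Real.pi / 2) ^ (d / 2) * t ^ (-(d / 2)) := by
    rw [Real.rpow_neg ht.le, ← div_div, Real.div_rpow (by positivity) ht.le, div_eq_mul_inv]
  have h_pow : t ^ (s / 2 - 1) = t ^ (s / 2 - 1 + d / 2) * t ^ (-(d / 2)) := by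
    rw [← Real.rpow_add ht, add_neg_cancel_right]
  simp_rw [h_factor]
  rw [lintegral_const_mul _ (by fun_prop), lintegral_exp_mul_exp_neg_mul_sq ht,
    ← ENNReal.ofReal_mul (by positivity), ← ENNReal.ofReal_mul (by positivity), h_div, h_pow]
  congr 1
  ring

theorem exists_mul_norm_sub_rpow_eq_lintegral_gaussianFactor {s : ℝ} (hs : 0 < s) :
    ∃ C : ℝ≥0∞, C ≠ 0 ∧ C ≠ ∞ ∧ ∀ x y : V, x ≠ y →
      ∫⁻ q, gaussianFactor s q x * gaussianFactor s q y
        ∂((volume.restrict (Set.Ioi (0 : ℝ))).prod (volume : Measure V)) =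
      C * ENNReal.ofReal (‖x - y‖ ^ (-s)) := by
  have := Real.Gamma_pos_of_pos (half_pos hs)
  refine ⟨ENNReal.ofReal ((Real.pi / 2) ^ ((finrank ℝ V : ℝ) / 2)) *
    ENNReal.ofReal (2 ^ (s / 2) * Real.Gamma (s / 2)), ?_, by finiteness, fun x y hxy => ?_⟩
  · rw [← ENNReal.ofReal_mul (by positivity)]
    exact (ENNReal.ofReal_pos.2 (by positivity)).ne'
  have h_meas (x : V) : Measurable fun q => gaussianFactor s q x :=
    (measurable_gaussianFactor s).comp (measurable_id.prodMk measurable_const)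
  have hd : 0 < ‖x - y‖ := norm_pos_iff.2 (sub_ne_zero.2 hxy)
  have h_pow : (1 / (‖x - y‖ ^ 2 / 2)) ^ (s / 2) = 2 ^ (s / 2) * ‖x - y‖ ^ (-s) := by
    rw [one_div_div, Real.div_rpow (by norm_num) (by positivity), ← Real.rpow_natCast,
      ← Real.rpow_mul hd.le, div_eq_mul_inv, ← Real.rpow_neg hd.le]
    congr 3
    push_cast
    ring
  rw [lintegral_prod _ ((h_meas x).fun_mul (h_meas y)).aemeasurable,
    setLIntegral_congr_fun measurableSet_Ioi fun t ht => lintegral_gaussianFactor_mul s ht x y,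
    lintegral_const_mul _ (by fun_prop),
    lintegral_Ioi_rpow_mul_exp_neg_mul (half_pos hs) (by positivity), h_pow,
    mul_assoc (ENNReal.ofReal _),
    ← ENNReal.ofReal_mul (q := ‖x - y‖ ^ (-s)) (by positivity)]
  congr 2
  ring

theorem two_mul_lintegral_lintegral_norm_sub_rpow_neg_le {s : ℝ} (hs : 0 < s) (μ ν : Measure V)
    [SFinite μ] [SFinite ν] [NullSingletonClass μ] [NullSingletonClass ν] :
    2 * ∫⁻ x, ∫⁻ y, ENNReal.ofReal (‖x - y‖ ^ (-s)) ∂ν ∂μ ≤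
      ∫⁻ x, ∫⁻ y, ENNReal.ofReal (‖x - y‖ ^ (-s)) ∂μ ∂μ +
        ∫⁻ x, ∫⁻ y, ENNReal.ofReal (‖x - y‖ ^ (-s)) ∂ν ∂ν := by
  obtain ⟨C, hC0, hC, h_eq⟩ := exists_mul_norm_sub_rpow_eq_lintegral_gaussianFactor (V := V) hs
  have h_scaled (μ ν : Measure V) [NullSingletonClass ν] :
      ∫⁻ x, ∫⁻ y, ∫⁻ q, gaussianFactor s q x * gaussianFactor s q y
        ∂((volume.restrict (Set.Ioi (0 : ℝ))).prod (volume : Measure V)) ∂ν ∂μ =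
      C * ∫⁻ x, ∫⁻ y, ENNReal.ofReal (‖x - y‖ ^ (-s)) ∂ν ∂μ := by
    rw [← lintegral_const_mul' _ _ hC]
    refine lintegral_congr fun x => ?_
    rw [← lintegral_const_mul' _ _ hC]
    refine lintegral_congr_ae ?_
    filter_upwards [compl_mem_ae_iff.2 (measure_singleton x)] with y hy
    exact h_eq x y (Ne.symm hy)
  have h := two_mul_lintegral_lintegral_le_of_factorization
    ((volume.restrict (Set.Ioi (0 : ℝ))).prod (volume : Measure V)) μ ν
    (measurable_gaussianFactor s)
  simp only [h_scaled] at h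
  rwa [← mul_add, mul_left_comm, ENNReal.mul_le_mul_iff_right hC0 hC] at h

end RieszKernel

theorem exists_norm_eq_and_norm_sub_eq {V : Type*} [NormedAddCommGroup V] [NormedSpace ℝ V]
    [Nontrivial V] {R : ℝ} (hR : 0 ≤ R) (x : V) :
    ∃ x' : V, ‖x'‖ = R ∧ ‖x - x'‖ = |‖x‖ - R| := by
  rcases eq_or_ne x 0 with rfl | hx
  · obtain ⟨v, hv⟩ := exists_norm_eq V hR
    exact ⟨v, hv, by simp [hv, abs_of_nonneg hR]⟩
  have hx' : ‖x‖ ≠ 0 := norm_ne_zero_iff.2 hx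
  refine ⟨(R / ‖x‖) • x, ?_, ?_⟩
  · rw [norm_smul, Real.norm_of_nonneg (by positivity), div_mul_cancel₀ _ hx']
  · have h_sub : x - (R / ‖x‖) • x = ((‖x‖ - R) / ‖x‖) • x := by
      rw [sub_div, div_self hx', sub_smul, one_smul]
    rw [h_sub, norm_smul, Real.norm_eq_abs, abs_div, abs_norm, div_mul_cancel₀ _ hx']

section RieszPotential

variable {V : Type*} [NormedAddCommGroup V] [InnerProductSpace ℝ V] [FiniteDimensional ℝ V]
  [MeasurableSpace V] [BorelSpace V]

open Module (finrank)
open scoped Pointwise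

/-- The Riesz potential `x ↦ ∫_E ‖x - y‖ ^ p dy`. The exponent is the one of the kernel itself, so
`rieszEnergy α E` is the integral over `E` of the potential of exponent `α - n`. -/
def rieszPotential (p : ℝ) (E : Set V) (x : V) : ℝ≥0∞ :=
  ∫⁻ y in E, ENNReal.ofReal (‖x - y‖ ^ p)

theorem measurable_rieszPotential (p : ℝ) (E : Set V) : Measurable (rieszPotential p E) :=
  Measurable.lintegral_prod_right' (f := fun z : V × V => ENNReal.ofReal (‖z.1 - z.2‖ ^ p))
    (by fun_prop)

theorem setLIntegral_smul_set {R : ℝ} (hR : 0 < R) (E : Set V) (f : V → ℝ≥0∞) :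
    ∫⁻ y in R • E, f y = ENNReal.ofReal (R ^ finrank ℝ V) * ∫⁻ y in E, f (R • y) := by
  have h_emb : MeasurableEmbedding fun y : V => R • y :=
    (Homeomorph.smulOfNeZero R hR.ne').measurableEmbedding
  have h_pre : (fun y : V => R • y) ⁻¹' (R • E) = E :=
    Set.preimage_image_eq E (smul_right_injective V hR.ne')
  have h_map := Measure.map_addHaar_smul (volume : Measure V) hR.ne'
  rw [abs_of_pos (by positivity)] at h_map
  rw [← h_pre, ← h_emb.lintegral_map, ← h_emb.restrict_map, h_map, h_pre,
    Measure.restrict_smul, lintegral_smul_measure, smul_eq_mul, ← mul_assoc,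
    ← ENNReal.ofReal_mul (by positivity), mul_inv_cancel₀ (by positivity), ENNReal.ofReal_one,
    one_mul]

theorem rieszPotential_smul (p : ℝ) {R : ℝ} (hR : 0 < R) (E : Set V) (x : V) :
    rieszPotential p (R • E) (R • x) =
      ENNReal.ofReal (R ^ (finrank ℝ V + p)) * rieszPotential p E x := by
  rw [rieszPotential, setLIntegral_smul_set hR, Real.rpow_add hR, Real.rpow_natCast,
    ENNReal.ofReal_mul (by positivity), mul_assoc]
  congr 1
  rw [rieszPotential, ← lintegral_const_mul' _ _ ENNReal.ofReal_ne_top]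
  refine lintegral_congr fun y => ?_
  rw [← smul_sub, norm_smul, Real.norm_of_nonneg hR.le, Real.mul_rpow hR.le (norm_nonneg _),
    ENNReal.ofReal_mul (by positivity)]

theorem lintegral_ball_norm_rpow_neg_lt_top [Nontrivial V] {s : ℝ} (hs : s < finrank ℝ V) (r : ℝ) :
    ∫⁻ y in ball (0 : V) r, ENNReal.ofReal (‖y‖ ^ (-s)) < ∞ := by
  have h_int : IntegrableOn (fun y : V => ‖y‖ ^ (-s)) (ball 0 r) :=
    integrableOn_ball_of_norm_le_rpow (C := 1) (α := s) Module.finrank_pos hs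
      (Eventually.of_forall fun y => by
        rw [one_mul, Real.norm_of_nonneg (by positivity)])
      (Measurable.aestronglyMeasurable (by fun_prop))
  exact (hasFiniteIntegral_iff_ofReal (Eventually.of_forall fun y => by positivity)).1 h_int.2

theorem rieszPotential_neg_ball_one_le {s : ℝ} (hs : 0 ≤ s) (x : V) :
    rieszPotential (-s) (ball 0 1) x ≤
      (∫⁻ y in ball (0 : V) 1, ENNReal.ofReal (‖y‖ ^ (-s))) + volume (ball (0 : V) 1) := by
  have h_near : ∫⁻ y in ball x 1, ENNReal.ofReal (‖x - y‖ ^ (-s)) =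
      ∫⁻ y in ball (0 : V) 1, ENNReal.ofReal (‖y‖ ^ (-s)) := by
    rw [← lintegral_indicator measurableSet_ball, ← lintegral_indicator measurableSet_ball,
      ← lintegral_sub_left_eq_self _ x]
    refine lintegral_congr fun y => ?_
    simp only [Set.indicator, mem_ball', dist_eq_norm, sub_sub_self, zero_sub, norm_neg]
  have h_far : ∫⁻ y in ball (0 : V) 1 \ ball x 1, ENNReal.ofReal (‖x - y‖ ^ (-s)) ≤
      volume (ball (0 : V) 1) := by
    calc
      _ ≤ ∫⁻ _ in ball (0 : V) 1 \ ball x 1, 1 := by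
        refine setLIntegral_mono' (measurableSet_ball.diff measurableSet_ball) fun y hy => ?_
        have hxy : 1 ≤ ‖x - y‖ := by simpa only [mem_ball', dist_eq_norm, not_lt] using hy.2
        exact ENNReal.ofReal_le_one.2 (Real.rpow_le_one_of_one_le_of_nonpos hxy (by linarith))
      _ ≤ volume (ball (0 : V) 1) := by
        rw [setLIntegral_one]
        exact measure_mono Set.sdiff_subset
  calc
    _ ≤ ∫⁻ y in ball x 1 ∪ ball 0 1 \ ball x 1, ENNReal.ofReal (‖x - y‖ ^ (-s)) :=
      lintegral_mono_set (by rw [Set.union_sdiff_self]; exact Set.subset_union_right)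
    _ ≤ _ := lintegral_union_le _ _ _
    _ ≤ _ := add_le_add h_near.le h_far

theorem exists_rieszPotential_neg_ball_le {s : ℝ} (hs : 0 ≤ s) (hsV : s < finrank ℝ V) :
    ∃ C : ℝ, 0 ≤ C ∧ ∀ R : ℝ, 0 < R → ∀ x : V,
      rieszPotential (-s) (ball 0 R) x ≤ ENNReal.ofReal (C * R ^ (finrank ℝ V - s)) := by
  have : Nontrivial V := Module.nontrivial_of_finrank_pos (R := ℝ)
    (Nat.cast_pos.1 (by linarith : (0 : ℝ) < finrank ℝ V))
  have h_fin :
      (∫⁻ y in ball (0 : V) 1, ENNReal.ofReal (‖y‖ ^ (-s))) + volume (ball (0 : V) 1) ≠ ∞ :=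
    ENNReal.add_ne_top.2 ⟨(lintegral_ball_norm_rpow_neg_lt_top hsV 1).ne, measure_ball_lt_top.ne⟩
  refine ⟨((∫⁻ y in ball (0 : V) 1, ENNReal.ofReal (‖y‖ ^ (-s))) +
    volume (ball (0 : V) 1)).toReal, ENNReal.toReal_nonneg, fun R hR x => ?_⟩
  rw [mul_comm, ENNReal.ofReal_mul (by positivity), ENNReal.ofReal_toReal h_fin, sub_eq_add_neg,
    ← smul_unitBall_of_pos hR, ← smul_inv_smul₀ hR.ne' x, rieszPotential_smul _ hR]
  gcongr
  exact rieszPotential_neg_ball_one_le hs _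

theorem rieszPotential_neg_ball_ne_top {s : ℝ} (hs : 0 ≤ s) (hsV : s < finrank ℝ V) {R : ℝ}
    (hR : 0 < R) (x : V) : rieszPotential (-s) (ball 0 R) x ≠ ∞ := by
  obtain ⟨C, -, h_bound⟩ := exists_rieszPotential_neg_ball_le (V := V) hs hsV
  exact ne_top_of_le_ne_top ENNReal.ofReal_ne_top (h_bound R hR x)

theorem rpow_neg_le_add_mul_abs_sub {a u w : ℝ} (ha : 0 ≤ a) (hu : 0 < u) (hw : 0 < w) :
    u ^ (-a) ≤ w ^ (-a) + a * |u - w| * u ^ (-(a + 1)) := by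
  have h_tangent : 1 - a * (w / u - 1) ≤ (w / u) ^ (-a) := by
    have hwu : 0 < w / u := by positivity
    have h_exp := Real.add_one_le_exp (Real.log (w / u) * -a)
    have h_log := mul_le_mul_of_nonneg_left (Real.log_le_sub_one_of_pos hwu) ha
    rw [Real.rpow_def_of_pos hwu]
    linarith
  rw [Real.div_rpow hw.le hu.le, le_div_iff₀ (by positivity)] at h_tangent
  have h_abs : -(a * |u - w|) ≤ a * (u - w) := by
    rw [← mul_neg]
    exact mul_le_mul_of_nonneg_left (neg_abs_le _) ha
  have h_split : (1 - a * (w / u - 1)) * u ^ (-a) = u ^ (-a) + a * (u - w) * (u ^ (-a) / u) := by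
    field_simp
    ring
  have h_pow : u ^ (-(a + 1)) = u ^ (-a) / u := by
    rw [neg_add, ← sub_eq_add_neg, Real.rpow_sub_one hu.ne']
  have h_mul := mul_le_mul_of_nonneg_right h_abs (by positivity : 0 ≤ u ^ (-a) / u)
  rw [h_pow]
  linarith

theorem rieszPotential_neg_le_add [Nontrivial V] {s : ℝ} (hs : 0 ≤ s) (E : Set V) (x x' : V) :
    rieszPotential (-s) E x ≤ rieszPotential (-s) E x' +
      ENNReal.ofReal (s * ‖x - x'‖) * rieszPotential (-(s + 1)) E x := by
  have h_ne (z : V) : ∀ᵐ y ∂(volume.restrict E), z ≠ y := by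
    filter_upwards [compl_mem_ae_iff.2 (measure_singleton z)] with y hy using Ne.symm hy
  calc
    _ ≤ ∫⁻ y in E, (ENNReal.ofReal (‖x' - y‖ ^ (-s)) +
          ENNReal.ofReal (s * ‖x - x'‖) * ENNReal.ofReal (‖x - y‖ ^ (-(s + 1)))) := by
      refine lintegral_mono_ae ?_
      filter_upwards [h_ne x, h_ne x'] with y hy hy'
      have h_tri : |‖x - y‖ - ‖x' - y‖| ≤ ‖x - x'‖ := by
        simpa only [sub_sub_sub_cancel_right] using abs_norm_sub_norm_le (x - y) (x' - y)
      rw [← ENNReal.ofReal_mul (by positivity), ← ENNReal.ofReal_add (by positivity)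
        (by positivity)]
      refine ENNReal.ofReal_le_ofReal ((rpow_neg_le_add_mul_abs_sub hs
        (norm_pos_iff.2 (sub_ne_zero.2 hy)) (norm_pos_iff.2 (sub_ne_zero.2 hy'))).trans ?_)
      gcongr
    _ = _ := by
      rw [lintegral_add_left (by fun_prop), lintegral_const_mul' _ _ ENNReal.ofReal_ne_top]
      rfl

theorem rieszPotential_ball_eq_of_norm_eq (p R : ℝ) {x x' : V} (h : ‖x‖ = ‖x'‖) :
    rieszPotential p (ball 0 R) x = rieszPotential p (ball 0 R) x' := by
  set φ := (ℝ ∙ (x - x'))ᗮ.reflection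
  have h_pre : φ ⁻¹' ball (0 : V) R = ball 0 R := by
    ext y
    simp
  symm
  rw [rieszPotential, ← φ.measurePreserving.setLIntegral_comp_preimage_emb
    φ.toMeasurableEquiv.measurableEmbedding, h_pre]
  refine lintegral_congr fun y => ?_
  rw [← Submodule.reflection_sub h, ← map_sub, φ.norm_map]

theorem exists_rieszPotential_neg_ball_le_add {s : ℝ} (hs : 0 ≤ s) (hsV : s + 1 < finrank ℝ V) :
    ∃ C : ℝ, 0 ≤ C ∧ ∀ R : ℝ, 0 < R → ∀ x y : V,
      rieszPotential (-s) (ball 0 R) x ≤ rieszPotential (-s) (ball 0 R) y +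
        ENNReal.ofReal (C * R ^ (finrank ℝ V - (s + 1)) * |‖x‖ - ‖y‖|) := by
  have : Nontrivial V := Module.nontrivial_of_finrank_pos (R := ℝ)
    (Nat.cast_pos.1 (by linarith : (0 : ℝ) < finrank ℝ V))
  obtain ⟨C, hC, h_bound⟩ := exists_rieszPotential_neg_ball_le (V := V) (by linarith) hsV
  refine ⟨s * C, by positivity, fun R hR x y => ?_⟩
  obtain ⟨x', hx', h_dist⟩ := exists_norm_eq_and_norm_sub_eq (norm_nonneg y) x
  calc
    _ ≤ _ := rieszPotential_neg_le_add hs (ball 0 R) x x'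
    _ ≤ rieszPotential (-s) (ball 0 R) y + ENNReal.ofReal (s * |‖x‖ - ‖y‖|) *
          ENNReal.ofReal (C * R ^ (finrank ℝ V - (s + 1))) := by
      rw [rieszPotential_ball_eq_of_norm_eq _ _ hx', h_dist]
      gcongr
      exact h_bound R hR x
    _ = _ := by
      rw [← ENNReal.ofReal_mul (by positivity)]
      ring_nf

end RieszPotential

section RieszEnergy

theorem rieszEnergy_ball_ne_top {n : ℕ} {α : ℝ} (hα : 0 < α) (hαn : α ≤ n) {R : ℝ} (hR : 0 < R) :
    rieszEnergy α (ball (0 : EuclideanSpace ℝ (Fin n)) R) ≠ ∞ := by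
  obtain ⟨C, -, h_bound⟩ := exists_rieszPotential_neg_ball_le (V := EuclideanSpace ℝ (Fin n))
    (s := n - α) (by linarith) (by simpa)
  simp only [rieszPotential, neg_sub, finrank_euclideanSpace, Fintype.card_fin] at h_bound
  exact (setLIntegral_lt_top_of_le_nnreal measure_ball_lt_top.ne
    ⟨(C * R ^ (n - (n - α))).toNNReal, fun x _ => h_bound R hR x⟩).ne

theorem exists_rieszEnergy_ball_le {n : ℕ} {α : ℝ} (hα1 : 1 < α) (hαn : α < n) :
    ∃ C : ℝ, 0 ≤ C ∧ ∀ R : ℝ, 0 < R → ∀ E : Set (EuclideanSpace ℝ (Fin n)), MeasurableSet E →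
      volume E = volume (ball (0 : EuclideanSpace ℝ (Fin n)) R) →
      rieszEnergy α (ball (0 : EuclideanSpace ℝ (Fin n)) R) ≤
        rieszEnergy α E + ENNReal.ofReal (C * R ^ (α - 1)) * radialAsymmetry R E := by
  obtain ⟨C, hC, h_lip⟩ := exists_rieszPotential_neg_ball_le_add
    (V := EuclideanSpace ℝ (Fin n)) (s := n - α) (by linarith) (by simpa using by linarith)
  simp only [finrank_euclideanSpace, Fintype.card_fin, neg_sub] at h_lip
  rw [show (n : ℝ) - (n - α + 1) = α - 1 by ring] at h_lip
  have : NeZero n := ⟨by rintro rfl; norm_num at hαn; linarith⟩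
  refine ⟨2 * C, by positivity, fun R hR E hE hER => ?_⟩
  set B : Set (EuclideanSpace ℝ (Fin n)) := ball 0 R
  set D := ENNReal.ofReal (C * R ^ (α - 1)) * radialAsymmetry R E with hD
  set u := rieszPotential (α - n) B
  obtain ⟨v, hv⟩ := exists_norm_eq (EuclideanSpace ℝ (Fin n)) hR.le
  have hv_fin : u v ≠ ∞ := by
    simpa only [neg_sub] using rieszPotential_neg_ball_ne_top (s := n - α) (by linarith)
      (by simpa using by linarith) hR v
  have h_potential : rieszEnergy α B ≤ (∫⁻ x in E, u x) + D := by
    have h_bath := bathtub_lintegral_symmDiff_le (c := u v) (k := 0) (f := u)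
      (e := fun x => ENNReal.ofReal (C * R ^ (α - 1) * |‖x‖ - R|))
      hE measurableSet_ball hER measure_ball_lt_top.ne (measurable_rieszPotential _ _) hv_fin
      (fun x _ => by simpa [hv] using h_lip R hR x v)
      (fun x _ => by simpa [hv, abs_sub_comm] using h_lip R hR v x)
    rw [lintegral_const_mul_abs_norm_sub (by positivity)] at h_bath
    simp only [Pi.zero_apply, lintegral_zero, add_zero] at h_bath
    exact h_bath
  have h_posDef : 2 * ∫⁻ x in E, u x ≤ rieszEnergy α E + rieszEnergy α B := by
    have h := two_mul_lintegral_lintegral_norm_sub_rpow_neg_le (sub_pos.2 hαn)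
      (volume.restrict E) (volume.restrict B)
    simp only [neg_sub] at h
    exact h
  rw [← ENNReal.add_le_add_iff_left (rieszEnergy_ball_ne_top (by linarith) hαn.le hR)]
  calc
    rieszEnergy α B + rieszEnergy α B = 2 * rieszEnergy α B := (two_mul _).symm
    _ ≤ 2 * ((∫⁻ x in E, u x) + D) := by gcongr
    _ = 2 * (∫⁻ x in E, u x) + 2 * D := mul_add _ _ _
    _ ≤ rieszEnergy α E + rieszEnergy α B + 2 * D := by gcongr
    _ = _ := by
      rw [mul_assoc 2 C, ENNReal.ofReal_mul zero_le_two, ENNReal.ofReal_ofNat, hD]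
      ring

end RieszEnergy

section InvariantMeasure

variable {G X : Type*} [Group G] [MeasurableSpace G] [MeasurableMul G] [MeasurableInv G]
  [MeasurableSpace X] [MulAction G X] [MeasurableSMul₂ G X]

theorem measure_mul_measure_univ_eq_of_ae_mem_orbit (η : Measure G) [SFinite η]
    [η.IsMulLeftInvariant] (μ : Measure X) [SFinite μ] [SMulInvariantMeasure G X μ] {v : X}
    (hμ : ∀ᵐ x ∂μ, x ∈ MulAction.orbit G v) {T : Set X} (hT : MeasurableSet T) :
    μ T * η Set.univ = η ((fun g : G => g⁻¹ • v) ⁻¹' T) * μ Set.univ := by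
  have h_meas : Measurable fun p : X × G => T.indicator (1 : X → ℝ≥0∞) (p.2⁻¹ • p.1) :=
    (measurable_one.indicator hT).comp (by fun_prop)
  have h_orbit : ∀ᵐ x ∂μ, ∫⁻ g : G, T.indicator 1 (g⁻¹ • x) ∂η =
      η ((fun g : G => g⁻¹ • v) ⁻¹' T) := by
    filter_upwards [hμ]
    rintro _ ⟨h, rfl⟩
    calc
      _ = ∫⁻ g : G, T.indicator 1 ((h * g)⁻¹ • h • v) ∂η :=
        (lintegral_mul_left_eq_self (fun g : G => T.indicator (1 : X → ℝ≥0∞) (g⁻¹ • h • v)) h).symm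
      _ = ∫⁻ g : G, ((fun g : G => g⁻¹ • v) ⁻¹' T).indicator 1 g ∂η := by
        simp only [mul_inv_rev, mul_smul, inv_smul_smul]
        rfl
      _ = _ := lintegral_indicator_one (measurable_inv.smul_const v hT)
  calc
    _ = ∫⁻ g : G, ∫⁻ x, T.indicator 1 (g⁻¹ • x) ∂μ ∂η := by
      rw [← lintegral_const]
      refine lintegral_congr fun g => ?_
      rw [← lintegral_indicator_one hT, (measurePreserving_smul g⁻¹ μ).lintegral_comp
        (measurable_one.indicator hT)]
    _ = ∫⁻ x, ∫⁻ g : G, T.indicator 1 (g⁻¹ • x) ∂η ∂μ :=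
      (lintegral_lintegral_swap h_meas.aemeasurable).symm
    _ = _ := by rw [lintegral_congr_ae h_orbit, lintegral_const]

theorem measure_mul_measure_univ_comm_of_ae_mem_orbit (η : Measure G) [IsFiniteMeasure η]
    [NeZero η] [η.IsMulLeftInvariant] (μ ν : Measure X) [SFinite μ] [SFinite ν]
    [SMulInvariantMeasure G X μ] [SMulInvariantMeasure G X ν] {v : X}
    (hμ : ∀ᵐ x ∂μ, x ∈ MulAction.orbit G v) (hν : ∀ᵐ x ∂ν, x ∈ MulAction.orbit G v)
    {T : Set X} (hT : MeasurableSet T) : μ T * ν Set.univ = ν T * μ Set.univ := by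
  refine (ENNReal.mul_left_inj (c := η Set.univ) (NeZero.ne _) (measure_ne_top _ _)).1 ?_
  rw [mul_right_comm, measure_mul_measure_univ_eq_of_ae_mem_orbit η μ hμ hT, mul_right_comm,
    mul_right_comm (ν T), measure_mul_measure_univ_eq_of_ae_mem_orbit η ν hν hT]

end InvariantMeasure

section OrthogonalGroup

variable {V : Type*} [NormedAddCommGroup V] [InnerProductSpace ℝ V] [FiniteDimensional ℝ V]

instance : ContinuousStar (V →L[ℝ] V) where
  continuous_star := (ContinuousLinearMap.adjoint (𝕜 := ℝ) (E := V) (F := V)).continuous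

instance : CompactSpace (unitary (V →L[ℝ] V)) := by
  refine isCompact_iff_compactSpace.1 <| isCompact_of_isClosed_isBounded isClosed_unitary <|
    (isBounded_closedBall (x := (0 : V →L[ℝ] V)) (r := 1)).subset fun u hu => ?_
  refine mem_closedBall_zero_iff.2 (u.opNorm_le_bound zero_le_one fun x => ?_)
  rw [one_mul]
  exact (Unitary.norm_map (⟨u, hu⟩ : unitary (V →L[ℝ] V)) x).le

theorem mem_orbit_unitary_of_norm_eq {v x : V} (h : ‖v‖ = ‖x‖) :
    x ∈ MulAction.orbit (unitary (V →L[ℝ] V)) v :=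
  ⟨Unitary.linearIsometryEquiv.symm (ℝ ∙ (v - x))ᗮ.reflection, Submodule.reflection_sub h⟩

variable [MeasurableSpace V]

theorem smulInvariantMeasure_unitary {μ : Measure V}
    (hμ : ∀ φ : V ≃ₗᵢ[ℝ] V, MeasurePreserving φ μ μ) :
    SMulInvariantMeasure (unitary (V →L[ℝ] V)) V μ :=
  ⟨fun g _ hT => (hμ (Unitary.linearIsometryEquiv g)).measure_preimage hT.nullMeasurableSet⟩

variable [BorelSpace V]

instance : MeasurableSMul₂ (unitary (V →L[ℝ] V)) V where
  measurable_smul :=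
    ((continuous_subtype_val.comp continuous_fst).clm_apply continuous_snd).measurable

theorem measure_mul_measure_univ_comm_of_measurePreserving_linearIsometryEquiv
    (μ ν : Measure V) [SFinite μ] [SFinite ν]
    (hμ : ∀ φ : V ≃ₗᵢ[ℝ] V, MeasurePreserving φ μ μ)
    (hν : ∀ φ : V ≃ₗᵢ[ℝ] V, MeasurePreserving φ ν ν) {v : V} (hμv : ∀ᵐ x ∂μ, ‖x‖ = ‖v‖)
    (hνv : ∀ᵐ x ∂ν, ‖x‖ = ‖v‖) {T : Set V} (hT : MeasurableSet T) :
    μ T * ν Set.univ = ν T * μ Set.univ := by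
  have := smulInvariantMeasure_unitary hμ
  have := smulInvariantMeasure_unitary hν
  have mem_orbit {x : V} (hx : ‖x‖ = ‖v‖) := mem_orbit_unitary_of_norm_eq hx.symm
  exact measure_mul_measure_univ_comm_of_ae_mem_orbit
    (Measure.haar : Measure (unitary (V →L[ℝ] V))) μ ν (hμv.mono fun _ => mem_orbit)
    (hνv.mono fun _ => mem_orbit) hT

end OrthogonalGroup

section RadialProjection

open Module

variable {V : Type*} [NormedAddCommGroup V] [InnerProductSpace ℝ V]

theorem norm_mul_norm_mul_dist_normalize_sq_le {x y : V} (hx : x ≠ 0) (hy : y ≠ 0) :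
    ‖x‖ * ‖y‖ * dist (NormedSpace.normalize x) (NormedSpace.normalize y) ^ 2 ≤ dist x y ^ 2 := by
  have hx0 : ‖x‖ ≠ 0 := norm_ne_zero_iff.2 hx
  have hy0 : ‖y‖ ≠ 0 := norm_ne_zero_iff.2 hy
  have h_inner : ‖x‖ * ‖y‖ * inner ℝ (NormedSpace.normalize x) (NormedSpace.normalize y) =
      inner ℝ x y := by
    simp only [NormedSpace.normalize, real_inner_smul_left, real_inner_smul_right]
    field_simp
  rw [dist_eq_norm, dist_eq_norm, norm_sub_sq_real, norm_sub_sq_real,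
    NormedSpace.norm_normalize hx, NormedSpace.norm_normalize hy]
  nlinarith [sq_nonneg (‖x‖ - ‖y‖)]

theorem dist_normalize_le {r : ℝ} (hr : 0 < r) {x y : V} (hx : r ≤ ‖x‖) (hy : r ≤ ‖y‖) :
    dist (NormedSpace.normalize x) (NormedSpace.normalize y) ≤ r⁻¹ * dist x y := by
  rw [inv_mul_eq_div, le_div_iff₀' hr]
  refine le_of_sq_le_sq ?_ dist_nonneg
  calc
    _ = r * r * dist (NormedSpace.normalize x) (NormedSpace.normalize y) ^ 2 := by ring
    _ ≤ ‖x‖ * ‖y‖ * dist (NormedSpace.normalize x) (NormedSpace.normalize y) ^ 2 := by gcongr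
    _ ≤ _ := norm_mul_norm_mul_dist_normalize_sq_le (norm_pos_iff.1 (hr.trans_le hx))
      (norm_pos_iff.1 (hr.trans_le hy))

theorem lipschitzOnWith_normalize {r : ℝ} (hr : 0 < r) :
    LipschitzOnWith (Real.toNNReal r⁻¹) NormedSpace.normalize {x : V | r ≤ ‖x‖} :=
  LipschitzOnWith.of_dist_le_mul fun x hx y hy => by
    rw [Real.coe_toNNReal _ (by positivity)]
    exact dist_normalize_le hr hx hy

theorem normalize_add_orthogonal_surjOn {v : V} (hv : ‖v‖ = 1) :
    Set.SurjOn (fun z : (ℝ ∙ v)ᗮ => NormedSpace.normalize (v + (z : V))) (closedBall 0 3)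
      (sphere 0 1 ∩ {θ | 1 / 2 < inner ℝ v θ}) := by
  rintro θ ⟨hθ, hc : 1 / 2 < inner ℝ v θ⟩
  rw [mem_sphere_zero_iff_norm] at hθ
  set c := inner ℝ v θ
  have hc0 : 0 < c := by linarith
  have h_mem : c⁻¹ • θ - v ∈ (ℝ ∙ v)ᗮ := by
    rw [Submodule.mem_orthogonal_singleton_iff_inner_right, inner_sub_right, real_inner_smul_right,
      inv_mul_cancel₀ hc0.ne', real_inner_self_eq_norm_sq, hv, one_pow, sub_self]
  refine ⟨⟨_, h_mem⟩, mem_closedBall_zero_iff.2 ?_, ?_⟩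
  · calc
      ‖c⁻¹ • θ - v‖ ≤ ‖c⁻¹ • θ‖ + ‖v‖ := norm_sub_le _ _
      _ = c⁻¹ + 1 := by rw [norm_smul, hθ, hv, mul_one, Real.norm_of_nonneg (by positivity)]
      _ ≤ 3 := by linarith [(inv_lt_comm₀ hc0 two_pos).2 (by linarith)]
  · simp only [add_sub_cancel]
    rw [NormedSpace.normalize_smul_of_pos (inv_pos.2 hc0),
      NormedSpace.normalize_eq_self_of_norm_eq_one hθ]

theorem lipschitzWith_normalize_add_orthogonal {v : V} (hv : ‖v‖ = 1) :
    LipschitzWith 1 fun z : (ℝ ∙ v)ᗮ => NormedSpace.normalize (v + (z : V)) := by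
  have one_le_norm (z : (ℝ ∙ v)ᗮ) : 1 ≤ ‖v + (z : V)‖ := by
    have h_sq := norm_add_sq_real v (z : V)
    rw [Submodule.mem_orthogonal_singleton_iff_inner_right.1 z.2, hv] at h_sq
    nlinarith [norm_nonneg (v + (z : V)), sq_nonneg ‖(z : V)‖]
  refine LipschitzWith.of_dist_le_mul fun z w => ?_
  have h := dist_normalize_le one_pos (one_le_norm z) (one_le_norm w)
  rwa [inv_one, dist_add_left] at h

variable [FiniteDimensional ℝ V]

theorem finrank_orthogonal_span_singleton_eq_sub_one {v : V} (hv : v ≠ 0) :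
    (finrank ℝ (ℝ ∙ v)ᗮ : ℝ) = finrank ℝ V - 1 := by
  rw [← Submodule.finrank_add_finrank_orthogonal (ℝ ∙ v), finrank_span_singleton hv]
  push_cast
  ring

variable [MeasurableSpace V] [BorelSpace V]

theorem hausdorffMeasure_unitSphere_lt_top :
    μH[(finrank ℝ V : ℝ) - 1] (sphere (0 : V) 1) < ∞ := by
  refine (isCompact_sphere (0 : V) 1).measure_lt_top_of_nhdsWithin fun v hv => ?_
  rw [mem_sphere_zero_iff_norm] at hv
  have hv0 : v ≠ 0 := norm_ne_zero_iff.1 (by rw [hv]; exact one_ne_zero)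
  refine ⟨_, Filter.mem_of_superset (inter_mem self_mem_nhdsWithin (mem_nhdsWithin_of_mem_nhds
    (IsOpen.mem_nhds (isOpen_lt continuous_const (by fun_prop)) ?_)))
    (normalize_add_orthogonal_surjOn hv), ?_⟩
  · change (1 : ℝ) / 2 < inner ℝ v v
    rw [real_inner_self_eq_norm_sq, hv]
    norm_num
  rw [← finrank_orthogonal_span_singleton_eq_sub_one hv0]
  refine ((lipschitzWith_normalize_add_orthogonal hv).lipschitzOnWith.hausdorffMeasure_image_le
    (Nat.cast_nonneg _)).trans_lt ?_
  rw [ENNReal.coe_one, ENNReal.one_rpow, one_mul]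
  exact (isCompact_closedBall _ _).measure_lt_top

end RadialProjection

section Sector

open Module
open scoped Pointwise

/-- The sector of radius `r` over a set `T` of directions: the points of the open ball of radius
`r` around the origin whose radial projection to the unit sphere lies in `T`. -/
def sector {V : Type*} [NormedAddCommGroup V] [NormedSpace ℝ V] (T : Set V) (r : ℝ) : Set V :=
  ball 0 r ∩ NormedSpace.normalize ⁻¹' T

theorem sector_univ {V : Type*} [NormedAddCommGroup V] [NormedSpace ℝ V] (r : ℝ) :
    sector (Set.univ : Set V) r = ball 0 r :=
  Set.inter_univ _

theorem smul_sector_one {V : Type*} [NormedAddCommGroup V] [NormedSpace ℝ V] (T : Set V) {r : ℝ}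
    (hr : 0 < r) : r • sector T 1 = sector T r := by
  ext x
  simp only [sector, Set.mem_smul_set_iff_inv_smul_mem₀ hr.ne', Set.mem_inter_iff,
    mem_ball_zero_iff, Set.mem_preimage, NormedSpace.normalize_smul_of_pos (inv_pos.2 hr),
    norm_smul, norm_inv, Real.norm_of_nonneg hr.le, inv_mul_lt_iff₀ hr, mul_one]

theorem measurable_normalize {V : Type*} [NormedAddCommGroup V] [NormedSpace ℝ V]
    [SecondCountableTopology V] [MeasurableSpace V] [BorelSpace V] :
    Measurable (NormedSpace.normalize : V → V) := by
  unfold NormedSpace.normalize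
  fun_prop

theorem measurableSet_sector {V : Type*} [NormedAddCommGroup V] [NormedSpace ℝ V]
    [SecondCountableTopology V] [MeasurableSpace V] [BorelSpace V] {T : Set V}
    (hT : MeasurableSet T) (r : ℝ) : MeasurableSet (sector T r) :=
  measurableSet_ball.inter (measurable_normalize hT)

theorem measurePreserving_restrict_unitSphere {V : Type*} [NormedAddCommGroup V]
    [NormedSpace ℝ V] [MeasurableSpace V] [BorelSpace V] (φ : V ≃ₗᵢ[ℝ] V) (d : ℝ) :
    MeasurePreserving φ (μH[d].restrict (sphere 0 1)) (μH[d].restrict (sphere 0 1)) := by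
  have h := (φ.toIsometryEquiv.measurePreserving_hausdorffMeasure d).restrict_preimage
    (s := sphere 0 1) isClosed_sphere.measurableSet
  have h_preimage : φ.toIsometryEquiv ⁻¹' sphere 0 1 = sphere 0 1 := by
    ext
    simp only [Set.mem_preimage, mem_sphere_zero_iff_norm, LinearIsometryEquiv.coe_toIsometryEquiv,
      φ.norm_map]
  rwa [h_preimage] at h

variable {V : Type*} [NormedAddCommGroup V] [InnerProductSpace ℝ V] [FiniteDimensional ℝ V]
  [MeasurableSpace V] [BorelSpace V]

theorem volume_sector (T : Set V) {r : ℝ} (hr : 0 < r) :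
    volume (sector T r) = ENNReal.ofReal (r ^ finrank ℝ V) * volume (sector T 1) := by
  rw [← smul_sector_one T hr, Measure.addHaar_smul, abs_of_pos (by positivity)]

theorem measurePreserving_map_normalize_unitBall (φ : V ≃ₗᵢ[ℝ] V) :
    MeasurePreserving φ ((volume.restrict (ball 0 1)).map NormedSpace.normalize)
      ((volume.restrict (ball 0 1)).map NormedSpace.normalize) := by
  have h_ball := φ.measurePreserving.restrict_preimage
    (measurableSet_ball : MeasurableSet (ball (0 : V) 1))
  rw [show φ ⁻¹' ball 0 1 = ball 0 1 by
    ext; simp only [Set.mem_preimage, mem_ball_zero_iff, φ.norm_map]] at h_ball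
  have h_comm : φ ∘ NormedSpace.normalize = NormedSpace.normalize ∘ φ := by
    ext x
    simp only [Function.comp_apply, NormedSpace.normalize, map_smul, φ.norm_map]
  refine ⟨φ.continuous.measurable, ?_⟩
  rw [Measure.map_map φ.continuous.measurable measurable_normalize, h_comm,
    ← Measure.map_map measurable_normalize φ.continuous.measurable, h_ball.map_eq]

-- Both sides are rotation-invariant measures of `T` on the unit sphere.
theorem volume_sector_mul_hausdorffMeasure_unitSphere [Nontrivial V] {T : Set V}
    (hT : MeasurableSet T) :
    volume (sector T 1) * μH[(finrank ℝ V : ℝ) - 1] (sphere (0 : V) 1) =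
      μH[(finrank ℝ V : ℝ) - 1] (T ∩ sphere 0 1) * volume (ball (0 : V) 1) := by
  have : IsFiniteMeasure (μH[(finrank ℝ V : ℝ) - 1].restrict (sphere (0 : V) 1)) :=
    ⟨by simpa only [Measure.restrict_apply_univ] using hausdorffMeasure_unitSphere_lt_top⟩
  obtain ⟨v, hv⟩ := exists_norm_eq V zero_le_one
  have h := measure_mul_measure_univ_comm_of_measurePreserving_linearIsometryEquiv
    ((volume.restrict (ball 0 1)).map NormedSpace.normalize)
    (μH[(finrank ℝ V : ℝ) - 1].restrict (sphere 0 1)) measurePreserving_map_normalize_unitBall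
    (measurePreserving_restrict_unitSphere · _) (v := v) ?_ ?_ hT
  · rwa [Measure.map_apply measurable_normalize hT, Measure.map_apply measurable_normalize .univ,
      Set.preimage_univ, Measure.restrict_apply_univ, Measure.restrict_apply_univ,
      Measure.restrict_apply hT, Measure.restrict_apply (measurable_normalize hT),
      Set.inter_comm (NormedSpace.normalize ⁻¹' T)] at h
  · rw [ae_map_iff measurable_normalize.aemeasurable
      (measurableSet_eq_fun (by fun_prop) (by fun_prop)), hv]
    exact ae_restrict_of_ae (by
      filter_upwards [Measure.ae_ne volume 0] with x hx using NormedSpace.norm_normalize hx)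
  · filter_upwards [ae_restrict_mem isClosed_sphere.measurableSet] with x hx
    rw [hv, mem_sphere_zero_iff_norm.1 hx]

end Sector

section Calibration

open Module

theorem lintegral_Ioo_ofReal_sub_pow (k : ℕ) {ρ : ℝ} (hρ : 0 ≤ ρ) :
    ∫⁻ t in Set.Ioo 0 ρ, ENNReal.ofReal ((ρ - t) ^ k) = ENNReal.ofReal (ρ ^ (k + 1) / (k + 1)) := by
  have h_int : ∫ t in (0 : ℝ)..ρ, (ρ - t) ^ k = ρ ^ (k + 1) / (k + 1) := by
    rw [intervalIntegral.integral_comp_sub_left (fun t => t ^ k), sub_self, sub_zero, integral_pow,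
      zero_pow k.succ_ne_zero, sub_zero]
  have h_cont : Continuous fun t : ℝ => (ρ - t) ^ k := by fun_prop
  rw [← h_int, intervalIntegral.integral_of_le hρ, integral_Ioc_eq_integral_Ioo,
    ofReal_integral_eq_lintegral_ofReal (h_cont.integrableOn_Icc.mono_set Set.Ioo_subset_Icc_self)]
  filter_upwards [ae_restrict_mem measurableSet_Ioo] with t ht
  exact pow_nonneg (sub_nonneg.2 ht.2.le) k

theorem tsum_measure_inter_shell_le {V : Type*} [NormedAddCommGroup V]
    [MeasurableSpace V] [BorelSpace V] (μ : Measure V) (S : Set V) {b : ℝ} (hb : 1 < b) :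
    ∑' j : ℤ, μ (S ∩ norm ⁻¹' Set.Ico (b ^ j) (b ^ (j + 1))) ≤ μ S := by
  have h_meas (j : ℤ) : MeasurableSet (norm ⁻¹' Set.Ico (b ^ j) (b ^ (j + 1)) : Set V) :=
    measurable_norm measurableSet_Ico
  have h_disj : Pairwise (Function.onFun Disjoint
      fun j : ℤ => (norm ⁻¹' Set.Ico (b ^ j) (b ^ (j + 1)) : Set V)) := fun i j hij =>
    Disjoint.preimage _ ((zpow_right_strictMono₀ hb).monotone.pairwise_disjoint_on_Ico_succ hij)
  simp_rw [Set.inter_comm S, ← Measure.restrict_apply (h_meas _)]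
  rw [← measure_iUnion h_disj h_meas]
  exact (measure_mono (Set.subset_univ _)).trans_eq (Measure.restrict_apply_univ S)

variable {V : Type*} [NormedAddCommGroup V] [InnerProductSpace ℝ V] [MeasurableSpace V]
  [BorelSpace V]

/-- The divergence, truncated below at `0`, of the radial field `x ↦ (‖x‖ (2 R - ‖x‖) / R ^ 2) u`
with `u = x / ‖x‖`. This field has length at most `1` where it points outward and is the outer unit
normal on the sphere of radius `R`, hence calibrates that sphere. -/
def calibrationDivergence (R : ℝ) (x : V) : ℝ≥0∞ :=
  ENNReal.ofReal ((2 * finrank ℝ V * R - (finrank ℝ V + 1) * ‖x‖) / R ^ 2)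

@[fun_prop]
theorem measurable_calibrationDivergence (R : ℝ) :
    Measurable (calibrationDivergence R : V → ℝ≥0∞) := by
  unfold calibrationDivergence
  fun_prop

variable [FiniteDimensional ℝ V]

theorem lintegral_sector_sub_norm {T : Set V} (hT : MeasurableSet T) {ρ : ℝ} (hρ : 0 ≤ ρ) :
    ∫⁻ x in sector T ρ, ENNReal.ofReal (ρ - ‖x‖) =
      ENNReal.ofReal (ρ ^ (finrank ℝ V + 1) / (finrank ℝ V + 1)) * volume (sector T 1) := by
  have h_level : ∀ t ∈ Set.Ioi (0 : ℝ), (volume.restrict (sector T ρ)) {x | t < ρ - ‖x‖} =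
      (Set.Iio ρ).indicator
        (fun t => ENNReal.ofReal ((ρ - t) ^ finrank ℝ V) * volume (sector T 1)) t := by
    intro t (ht : 0 < t)
    have h_ball : {x : V | t < ρ - ‖x‖} = ball 0 (ρ - t) := by
      ext x
      simp only [Set.mem_ofPred_eq, mem_ball_zero_iff, lt_sub_comm]
    rw [h_ball, Measure.restrict_apply measurableSet_ball, sector, ← Set.inter_assoc,
      Set.inter_eq_left.2 (ball_subset_ball (sub_le_self ρ ht.le)), ← sector]
    rcases lt_or_ge t ρ with htρ | htρ
    · rw [Set.indicator_of_mem (Set.mem_Iio.2 htρ), volume_sector T (sub_pos.2 htρ)]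
    · rw [Set.indicator_of_notMem (Set.notMem_Iio.2 htρ), sector, ball_eq_empty.2 (by linarith),
        Set.empty_inter, measure_empty]
  have h_nonneg : 0 ≤ᵐ[volume.restrict (sector T ρ)] fun x => ρ - ‖x‖ := by
    filter_upwards [ae_restrict_mem (measurableSet_sector hT ρ)] with x hx
    exact sub_nonneg.2 (mem_ball_zero_iff.1 hx.1).le
  rw [lintegral_eq_lintegral_meas_lt _ h_nonneg (by fun_prop),
    setLIntegral_congr_fun measurableSet_Ioi h_level, setLIntegral_indicator measurableSet_Iio,
    Set.Iio_inter_Ioi, lintegral_mul_const _ (by fun_prop), lintegral_Ioo_ofReal_sub_pow _ hρ]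

theorem lintegral_sector_calibrationDivergence {T : Set V} (hT : MeasurableSet T) {R ρ : ℝ}
    (hρ : 0 < ρ) (hρR : (finrank ℝ V + 1) * ρ ≤ 2 * finrank ℝ V * R) :
    ∫⁻ x in sector T ρ, calibrationDivergence R x =
      ENNReal.ofReal (finrank ℝ V * (ρ ^ finrank ℝ V * (2 * R - ρ)) / R ^ 2) *
        volume (sector T 1) := by
  set d := finrank ℝ V
  have h_const : 0 ≤ (2 * d * R - (d + 1) * ρ) / R ^ 2 :=
    div_nonneg (sub_nonneg.2 hρR) (sq_nonneg R)
  have h_split : ∀ x ∈ sector T ρ, calibrationDivergence R x =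
      ENNReal.ofReal ((2 * d * R - (d + 1) * ρ) / R ^ 2) +
        ENNReal.ofReal ((d + 1) / R ^ 2) * ENNReal.ofReal (ρ - ‖x‖) := by
    intro x hx
    have hxρ : 0 ≤ ρ - ‖x‖ := sub_nonneg.2 (mem_ball_zero_iff.1 hx.1).le
    rw [← ENNReal.ofReal_mul (by positivity), ← ENNReal.ofReal_add h_const (by positivity),
      calibrationDivergence]
    congr 1
    ring
  rw [setLIntegral_congr_fun (measurableSet_sector hT ρ) h_split,
    lintegral_add_left measurable_const, lintegral_const_mul _ (by fun_prop),
    lintegral_sector_sub_norm hT hρ.le, setLIntegral_const, volume_sector T hρ, ← mul_assoc,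
    ← mul_assoc, ← add_mul, ← ENNReal.ofReal_mul h_const, ← ENNReal.ofReal_mul (by positivity),
    ← ENNReal.ofReal_add (by positivity) (by positivity)]
  congr 2
  field_simp
  ring

variable [Nontrivial V]

theorem lintegral_ball_calibrationDivergence {R : ℝ} (hR : 0 < R) :
    ∫⁻ x in ball (0 : V) R, calibrationDivergence R x =
      ENNReal.ofReal (finrank ℝ V * R ^ ((finrank ℝ V : ℝ) - 1)) * volume (ball (0 : V) 1) := by
  have hd : (1 : ℝ) ≤ finrank ℝ V := mod_cast finrank_pos (R := ℝ) (M := V)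
  rw [← sector_univ, lintegral_sector_calibrationDivergence MeasurableSet.univ hR (by nlinarith),
    sector_univ, Real.rpow_sub_one hR.ne', Real.rpow_natCast]
  congr 2
  field_simp
  ring

theorem lintegral_sector_calibrationDivergence_le {T : Set V} (hT : MeasurableSet T) {R ρ : ℝ}
    (hR : 0 < R) (hρ : 0 < ρ) :
    ∫⁻ x in sector T ρ, calibrationDivergence R x ≤
      ENNReal.ofReal (finrank ℝ V * ρ ^ ((finrank ℝ V : ℝ) - 1)) * volume (sector T 1) := by
  have hd : (1 : ℝ) ≤ finrank ℝ V := mod_cast finrank_pos (R := ℝ) (M := V)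
  set d := finrank ℝ V
  set s : ℝ := 2 * d * R / (d + 1) with hs
  have hs0 : 0 < s := by positivity
  have h_zero : ∫⁻ x in (ball (0 : V) s)ᶜ, calibrationDivergence R x = 0 := by
    refine setLIntegral_eq_zero measurableSet_ball.compl fun x hx => ENNReal.ofReal_eq_zero.2 ?_
    rw [Set.mem_compl_iff, mem_ball_zero_iff, not_lt, hs, div_le_iff₀ (by positivity)] at hx
    exact div_nonpos_of_nonpos_of_nonneg (by linarith) (sq_nonneg R)
  have hm : 0 < min ρ s := lt_min hρ hs0
  calc
    _ ≤ ∫⁻ x in sector T (min ρ s) ∪ (ball 0 s)ᶜ, calibrationDivergence R x := by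
      refine lintegral_mono_set fun x hx => ?_
      rcases lt_or_ge ‖x‖ s with hxs | hxs
      · exact Or.inl ⟨mem_ball_zero_iff.2 (lt_min (mem_ball_zero_iff.1 hx.1) hxs), hx.2⟩
      · exact Or.inr (by rwa [Set.mem_compl_iff, mem_ball_zero_iff, not_lt])
    _ ≤ ∫⁻ x in sector T (min ρ s), calibrationDivergence R x := by
      exact (lintegral_union_le _ _ _).trans_eq (by rw [h_zero, add_zero])
    _ = ENNReal.ofReal (d * (min ρ s ^ d * (2 * R - min ρ s)) / R ^ 2) * volume (sector T 1) :=
      lintegral_sector_calibrationDivergence hT hm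
        ((le_div_iff₀' (by positivity)).1 (min_le_right ρ s))
    _ ≤ ENNReal.ofReal (d * min ρ s ^ ((d : ℝ) - 1)) * volume (sector T 1) := by
      gcongr
      rw [div_le_iff₀ (by positivity), mul_assoc (d : ℝ), Real.rpow_sub_one hm.ne',
        Real.rpow_natCast, div_mul_eq_mul_div]
      gcongr
      rw [le_div_iff₀ hm, mul_assoc]
      gcongr
      nlinarith [sq_nonneg (R - min ρ s)]
    _ ≤ _ := by
      gcongr
      exact min_le_left ρ s

theorem exists_measurableSet_normalize_image_subset {r : ℝ} (hr : 0 < r) {S : Set V}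
    (hS : ∀ x ∈ S, r ≤ ‖x‖) :
    ∃ T, MeasurableSet T ∧ NormedSpace.normalize '' S ⊆ T ∧
      μH[(finrank ℝ V : ℝ) - 1] (T ∩ sphere 0 1) ≤
        ENNReal.ofReal (r⁻¹ ^ ((finrank ℝ V : ℝ) - 1)) * μH[(finrank ℝ V : ℝ) - 1] S := by
  have hd : (1 : ℝ) ≤ finrank ℝ V := mod_cast finrank_pos (R := ℝ) (M := V)
  refine ⟨toMeasurable μH[(finrank ℝ V : ℝ) - 1] (NormedSpace.normalize '' S),
    measurableSet_toMeasurable _ _,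
    subset_toMeasurable _ _, (measure_mono Set.inter_subset_left).trans ?_⟩
  rw [measure_toMeasurable, ← ENNReal.ofReal_rpow_of_pos (inv_pos.2 hr)]
  exact ((lipschitzOnWith_normalize hr).mono hS).hausdorffMeasure_image_le (sub_nonneg.2 hd)

theorem lintegral_mul_hausdorffMeasure_unitSphere_le_of_le_norm {w : V → ℝ≥0∞}
    (hw : ∀ T, MeasurableSet T → ∀ ρ : ℝ, 0 < ρ → ∫⁻ x in sector T ρ, w x ≤
      ENNReal.ofReal (finrank ℝ V * ρ ^ ((finrank ℝ V : ℝ) - 1)) * volume (sector T 1))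
    {r s : ℝ} (hr : 0 < r) (hs : 0 < s) {S : Set V} (hS : ∀ x ∈ S, r ≤ ‖x‖) :
    (∫⁻ x in {x ∈ ball 0 s | ∃ l : ℝ, 0 < l ∧ l • x ∈ S}, w x) *
        μH[(finrank ℝ V : ℝ) - 1] (sphere (0 : V) 1) ≤
      ENNReal.ofReal ((s / r) ^ ((finrank ℝ V : ℝ) - 1)) *
        (finrank ℝ V * volume (ball (0 : V) 1) * μH[(finrank ℝ V : ℝ) - 1] S) := by
  obtain ⟨T, hT, hST, hTS⟩ := exists_measurableSet_normalize_image_subset hr hS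
  set d := finrank ℝ V
  have h_subset : {x ∈ ball 0 s | ∃ l : ℝ, 0 < l ∧ l • x ∈ S} ⊆ sector T s := by
    rintro x ⟨hx, l, hl, hlx⟩
    exact ⟨hx, hST ⟨l • x, hlx, NormedSpace.normalize_smul_of_pos hl x⟩⟩
  calc
    _ ≤ ENNReal.ofReal (d * s ^ ((d : ℝ) - 1)) * volume (sector T 1) *
        μH[(d : ℝ) - 1] (sphere (0 : V) 1) := by
      gcongr
      exact (lintegral_mono_set h_subset).trans (hw T hT s hs)
    _ = ENNReal.ofReal (d * s ^ ((d : ℝ) - 1)) *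
        (μH[(d : ℝ) - 1] (T ∩ sphere 0 1) * volume (ball (0 : V) 1)) := by
      rw [mul_assoc, volume_sector_mul_hausdorffMeasure_unitSphere hT]
    _ ≤ ENNReal.ofReal (d * s ^ ((d : ℝ) - 1)) *
        (ENNReal.ofReal (r⁻¹ ^ ((d : ℝ) - 1)) * μH[(d : ℝ) - 1] S * volume (ball (0 : V) 1)) := by
      gcongr
    _ = _ := by
      rw [div_eq_mul_inv, Real.mul_rpow hs.le (by positivity), ENNReal.ofReal_mul (by positivity),
        ENNReal.ofReal_mul (by positivity), ENNReal.ofReal_natCast]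
      ring

theorem lintegral_mul_hausdorffMeasure_unitSphere_le_of_one_lt {w : V → ℝ≥0∞}
    (hw : ∀ T, MeasurableSet T → ∀ ρ : ℝ, 0 < ρ → ∫⁻ x in sector T ρ, w x ≤
      ENNReal.ofReal (finrank ℝ V * ρ ^ ((finrank ℝ V : ℝ) - 1)) * volume (sector T 1))
    {E S : Set V} (hES : ∀ᵐ x, x ∈ E → ∃ l : ℝ, 1 ≤ l ∧ l • x ∈ S) {b : ℝ} (hb : 1 < b) :
    (∫⁻ x in E, w x) * μH[(finrank ℝ V : ℝ) - 1] (sphere (0 : V) 1) ≤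
      ENNReal.ofReal (b ^ ((finrank ℝ V : ℝ) - 1)) *
        (finrank ℝ V * volume (ball (0 : V) 1) * μH[(finrank ℝ V : ℝ) - 1] S) := by
  set d := finrank ℝ V
  have hb0 : 0 < b := one_pos.trans hb
  set shell : ℤ → Set V := fun j => S ∩ norm ⁻¹' Set.Ico (b ^ j) (b ^ (j + 1))
  set cone : ℤ → Set V := fun j => {x ∈ ball 0 (b ^ (j + 1)) | ∃ l : ℝ, 0 < l ∧ l • x ∈ shell j}
  have h_cover : ∀ᵐ x : V, x ∈ E → x ∈ ⋃ j, cone j := by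
    filter_upwards [hES, Measure.ae_ne volume 0] with x hx hx0 hxE
    obtain ⟨l, hl, hlx⟩ := hx hxE
    have hl0 : 0 < l := one_pos.trans_le hl
    obtain ⟨j, hj⟩ := exists_mem_Ico_zpow (norm_pos_iff.2 (smul_ne_zero hl0.ne' hx0)) hb
    refine Set.mem_iUnion.2 ⟨j, mem_ball_zero_iff.2 (lt_of_le_of_lt ?_ hj.2), l, hl0, hlx, hj⟩
    rw [norm_smul, Real.norm_of_nonneg hl0.le]
    exact le_mul_of_one_le_left (norm_nonneg x) hl
  have h_cone (j : ℤ) : (∫⁻ x in cone j, w x) * μH[(d : ℝ) - 1] (sphere (0 : V) 1) ≤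
      ENNReal.ofReal (b ^ ((d : ℝ) - 1)) *
        (d * volume (ball (0 : V) 1) * μH[(d : ℝ) - 1] (shell j)) := by
    have h := lintegral_mul_hausdorffMeasure_unitSphere_le_of_le_norm hw (zpow_pos hb0 j)
      (zpow_pos hb0 (j + 1)) (S := shell j) fun x hx => hx.2.1
    rwa [← zpow_sub₀ hb0.ne', add_sub_cancel_left, zpow_one] at h
  calc
    _ ≤ (∑' j, ∫⁻ x in cone j, w x) * μH[(d : ℝ) - 1] (sphere (0 : V) 1) := by
      gcongr
      exact (lintegral_mono_set' h_cover).trans (lintegral_iUnion_le _ _)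
    _ ≤ ∑' j, ENNReal.ofReal (b ^ ((d : ℝ) - 1)) *
        (d * volume (ball (0 : V) 1) * μH[(d : ℝ) - 1] (shell j)) := by
      rw [← ENNReal.tsum_mul_right]
      exact ENNReal.tsum_le_tsum h_cone
    _ ≤ _ := by
      rw [ENNReal.tsum_mul_left, ENNReal.tsum_mul_left]
      gcongr
      exact tsum_measure_inter_shell_le _ S hb

theorem lintegral_mul_hausdorffMeasure_unitSphere_le {w : V → ℝ≥0∞}
    (hw : ∀ T, MeasurableSet T → ∀ ρ : ℝ, 0 < ρ → ∫⁻ x in sector T ρ, w x ≤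
      ENNReal.ofReal (finrank ℝ V * ρ ^ ((finrank ℝ V : ℝ) - 1)) * volume (sector T 1))
    {E S : Set V} (hES : ∀ᵐ x, x ∈ E → ∃ l : ℝ, 1 ≤ l ∧ l • x ∈ S) :
    (∫⁻ x in E, w x) * μH[(finrank ℝ V : ℝ) - 1] (sphere (0 : V) 1) ≤
      finrank ℝ V * volume (ball (0 : V) 1) * μH[(finrank ℝ V : ℝ) - 1] S := by
  set M := finrank ℝ V * volume (ball (0 : V) 1) * μH[(finrank ℝ V : ℝ) - 1] S
  have h_lim : Tendsto (fun b : ℝ => ENNReal.ofReal (b ^ ((finrank ℝ V : ℝ) - 1)) * M)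
      (nhdsWithin 1 (Set.Ioi 1)) (nhds (ENNReal.ofReal (1 ^ ((finrank ℝ V : ℝ) - 1)) * M)) := by
    refine ENNReal.Tendsto.mul_const ?_ (Or.inl ?_)
    · exact (ENNReal.continuous_ofReal.tendsto _).comp
        ((Real.continuousAt_rpow_const 1 _ (Or.inl one_ne_zero)).tendsto.mono_left
          nhdsWithin_le_nhds)
    · rw [Real.one_rpow, ENNReal.ofReal_one]
      exact one_ne_zero
  rw [Real.one_rpow, ENNReal.ofReal_one, one_mul] at h_lim
  refine ge_of_tendsto h_lim ?_
  filter_upwards [self_mem_nhdsWithin] with b hb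
  exact lintegral_mul_hausdorffMeasure_unitSphere_le_of_one_lt hw hES hb

end Calibration

section ClosedCovers

theorem isPreconnected_subset_compl_of_disjoint_frontier {X : Type*} [TopologicalSpace X]
    {P t : Set X} (ht : IsPreconnected t) (h_disj : Disjoint t (frontier P)) {q : X} (hqt : q ∈ t)
    (hqP : q ∉ P) : t ⊆ Pᶜ := by
  have h_interior : ∀ x ∈ t, x ∈ closure Pᶜ → x ∈ interior Pᶜ := fun x hxt hx => by
    by_contra hxi
    exact h_disj.ne_of_mem hxt (frontier_compl P ▸ ⟨hx, hxi⟩ : x ∈ frontier P) rfl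
  refine (ht.subset_of_closure_inter_subset isOpen_interior
    ⟨q, hqt, h_interior q hqt (subset_closure hqP)⟩ fun x hx => ?_).trans interior_subset
  exact h_interior x hx.2 (closure_mono interior_subset hx.1)

variable {V : Type*} [NormedAddCommGroup V] [NormedSpace ℝ V] [ProperSpace V]

theorem exists_ball_subset_compl_of_frontier_inter_ball_subset {P A : Set V} (hAP : A ⊆ P)
    {γ : V} (hγ : γ ∈ frontier P) {δ : ℝ} (hδ : 0 < δ) (h : frontier P ∩ ball γ δ ⊆ A) :
    ∃ l ∈ A, ∃ q ≠ l, ball q (dist q l) ⊆ Pᶜ := by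
  have hγc : γ ∈ closure Pᶜ := by
    rw [closure_compl]
    exact hγ.2
  obtain ⟨q, hqP, hqγ⟩ := Metric.mem_closure_iff.1 hγc (δ / 2) (half_pos hδ)
  obtain ⟨l, hl, h_nearest⟩ := isClosed_frontier.exists_infDist_eq_dist ⟨γ, hγ⟩ q
  have hql : dist q l < δ / 2 :=
    h_nearest ▸ (infDist_le_dist_of_mem hγ).trans_lt (dist_comm q γ ▸ hqγ)
  have hlA : l ∈ A := h ⟨hl, mem_ball'.2 <| (dist_triangle γ q l).trans_lt (by linarith)⟩
  have hne : q ≠ l := fun heq => hqP (hAP (heq ▸ hlA))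
  refine ⟨l, hlA, q, hne, isPreconnected_subset_compl_of_disjoint_frontier
    (convex_ball q _).isPreconnected (Set.disjoint_left.2 fun x hx hxP => ?_)
    (mem_ball_self (dist_pos.2 hne)) hqP⟩
  exact (mem_ball'.1 hx).not_ge (h_nearest ▸ infDist_le_dist_of_mem hxP)

theorem exists_ball_subset_of_iUnion_isClosed {A B : ℕ → Set V} (hA : ∀ k, IsClosed (A k))
    (hB : ∀ k, IsClosed (B k)) (hAB : ⋃ k, B k = (⋃ k, A k)ᶜ) (hA_ne : (⋃ k, A k).Nonempty)
    (hB_ne : (⋃ k, B k).Nonempty) :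
    ∃ k l q, q ≠ l ∧
      (l ∈ A k ∧ ball q (dist q l) ⊆ ⋃ j, B j ∨ l ∈ B k ∧ ball q (dist q l) ⊆ ⋃ j, A j) := by
  set P := ⋃ k, A k
  have h_frontier : (frontier P).Nonempty :=
    nonempty_frontier_iff.2 ⟨hA_ne, Set.nonempty_compl.1 (hAB ▸ hB_ne)⟩
  have : Nonempty (frontier P) := h_frontier.to_subtype
  have : CompleteSpace (frontier P) := isClosed_frontier.completeSpace_coe
  let f : ℕ ⊕ ℕ → Set (frontier P) := fun i => Subtype.val ⁻¹' Sum.elim A B i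
  have h_closed : ∀ i, IsClosed (f i) := fun i =>
    (Sum.rec hA hB i : IsClosed (Sum.elim A B i)).preimage continuous_subtype_val
  have h_cover : ⋃ i, f i = Set.univ := by
    rw [Set.iUnion_sum]
    simp only [f, Sum.elim_inl, Sum.elim_inr, ← Set.preimage_iUnion, ← Set.preimage_union]
    rw [hAB, Set.union_compl_self, Set.preimage_univ]
  obtain ⟨i, ⟨γ, hγ⟩, hi⟩ := nonempty_interior_of_iUnion_of_closed h_closed h_cover
  obtain ⟨δ, hδ, h_ball⟩ := Metric.mem_nhds_iff.1 (mem_interior_iff_mem_nhds.1 hi)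
  have h_sub : frontier P ∩ ball γ δ ⊆ Sum.elim A B i := fun x hx => @h_ball ⟨x, hx.1⟩ hx.2
  rcases i with k | k
  · obtain ⟨l, hl, q, hq, h⟩ := exists_ball_subset_compl_of_frontier_inter_ball_subset
      (Set.subset_iUnion A k) hγ hδ h_sub
    exact ⟨k, l, q, hq, Or.inl ⟨hl, hAB ▸ h⟩⟩
  · rw [← frontier_compl, ← hAB] at h_sub hγ
    obtain ⟨l, hl, q, hq, h⟩ := exists_ball_subset_compl_of_frontier_inter_ball_subset
      (Set.subset_iUnion B k) hγ hδ h_sub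
    exact ⟨k, l, q, hq, Or.inr ⟨hl, by rwa [hAB, compl_compl] at h⟩⟩

end ClosedCovers

section Density

variable {n : ℕ} {E : Set (EuclideanSpace ℝ (Fin n))} {x : EuclideanSpace ℝ (Fin n)}

theorem HasDensity.unique {a b : ℝ} (ha : HasDensity E x a) (hb : HasDensity E x b) : a = b :=
  tendsto_nhds_unique ha hb

theorem HasDensity.compl (hE : MeasurableSet E) {d : ℝ} (h : HasDensity E x d) :
    HasDensity Eᶜ x (1 - d) := by
  refine (tendsto_const_nhds.sub h).congr' ?_
  filter_upwards [self_mem_nhdsWithin] with r (hr : 0 < r)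
  have h_pos : 0 < volume.real (ball x r) :=
    ENNReal.toReal_pos (measure_ball_pos _ _ hr).ne' measure_ball_lt_top.ne
  have h_add : volume.real (ball x r ∩ E) + volume.real (ball x r \ E) = volume.real (ball x r) :=
    measureReal_inter_add_sdiff hE
  simp only [← measureReal_def]
  rw [Set.inter_comm, Set.inter_comm Eᶜ, ← Set.sdiff_eq, ← h_add]
  rw [← h_add] at h_pos
  field_simp
  ring

theorem hasDensity_compl_zero_iff (hE : MeasurableSet E) :
    HasDensity Eᶜ x 0 ↔ HasDensity E x 1 :=
  ⟨fun h => by simpa only [compl_compl, sub_zero] using h.compl hE.compl,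
    fun h => by simpa only [sub_self] using h.compl hE⟩

theorem hasDensity_compl_one_iff (hE : MeasurableSet E) :
    HasDensity Eᶜ x 1 ↔ HasDensity E x 0 := by
  rw [← hasDensity_compl_zero_iff hE.compl, compl_compl]

theorem ae_hasDensity_indicator (hE : MeasurableSet E) :
    ∀ᵐ x, HasDensity E x (E.indicator 1 x) := by
  filter_upwards [Besicovitch.ae_tendsto_measure_inter_div_of_measurableSet volume hE] with x hx
  have h_ne_top : E.indicator (1 : EuclideanSpace ℝ (Fin n) → ℝ≥0∞) x ≠ ∞ := by
    by_cases hxE : x ∈ E <;> simp [hxE]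
  have h_toReal : (E.indicator (1 : EuclideanSpace ℝ (Fin n) → ℝ≥0∞) x).toReal =
      E.indicator 1 x := by
    by_cases hxE : x ∈ E <;> simp [hxE]
  rw [HasDensity, ← h_toReal]
  refine ((ENNReal.tendsto_toReal h_ne_top).comp hx).congr' ?_
  filter_upwards [self_mem_nhdsWithin] with r (hr : 0 < r)
  have h_ae : closedBall x r =ᵐ[volume] ball x r := by
    rw [← ball_union_sphere]
    exact union_ae_eq_left_of_ae_eq_empty
      (ae_eq_empty.2 (Measure.addHaar_sphere_of_ne_zero _ _ hr.ne'))
  rw [Function.comp_apply, measure_congr h_ae, measure_congr ((ae_eq_refl E).inter h_ae),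
    ENNReal.toReal_div]

theorem ae_hasDensity_one (hE : MeasurableSet E) : ∀ᵐ x, x ∈ E → HasDensity E x 1 := by
  filter_upwards [ae_hasDensity_indicator hE] with x hx hxE
  simpa only [Set.indicator_of_mem hxE, Pi.one_apply] using hx

theorem volume_le_inter_of_hasDensity_one (hE : MeasurableSet E)
    {S : Set (EuclideanSpace ℝ (Fin n))} (hS : ∀ x ∈ S, HasDensity E x 1) :
    volume S ≤ volume (E ∩ S) := by
  refine measure_mono_ae ?_
  filter_upwards [ae_hasDensity_indicator hE] with x hx hxS
  refine ⟨?_, hxS⟩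
  by_contra hxE
  rw [Set.indicator_of_notMem hxE] at hx
  exact zero_ne_one (hx.unique (hS x hxS))

/-- The points where `E` has uniformly small density at all scales below `1 / (k + 1)`. The volume
of `E ∩ ball x r` is compared with that of the ball of radius `r / 96`, rather than with a multiple
of the volume of `ball x r`, to keep the dimension out of the estimates. -/
def lowDensity (E : Set (EuclideanSpace ℝ (Fin n))) (k : ℕ) : Set (EuclideanSpace ℝ (Fin n)) :=
  {x | ∀ r : ℝ, 0 < r → r < 1 / ((k : ℝ) + 1) →
    volume (E ∩ ball x r) ≤ 2⁻¹ * volume (ball x (r / 96))}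

theorem isClosed_lowDensity (E : Set (EuclideanSpace ℝ (Fin n))) (k : ℕ) :
    IsClosed (lowDensity E k) := by
  refine isOpen_compl_iff.1 (Metric.isOpen_iff.2 fun x hx => ?_)
  simp only [lowDensity, Set.mem_compl_iff, Set.mem_ofPred_eq, not_forall, not_le] at hx
  obtain ⟨r, hr, hrk, h_lt⟩ := hx
  set u : ℕ → Set (EuclideanSpace ℝ (Fin n)) := fun j => E ∩ ball x (r - 1 / ((j : ℝ) + 1))
  have h_union : E ∩ ball x r = ⋃ j, u j := by
    rw [← Set.inter_iUnion]
    congr 1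
    refine Set.Subset.antisymm (fun y hy => ?_)
      (Set.iUnion_subset fun j => ball_subset_ball (sub_le_self r Nat.one_div_pos_of_nat.le))
    obtain ⟨j, hj⟩ := exists_nat_one_div_lt (sub_pos.2 (mem_ball.1 hy))
    exact Set.mem_iUnion.2 ⟨j, mem_ball.2 (lt_sub_comm.1 hj)⟩
  have h_mono : Monotone u := fun i j hij => Set.inter_subset_inter_right E <|
    ball_subset_ball (sub_le_sub_left (Nat.one_div_le_one_div hij) r)
  rw [h_union, h_mono.measure_iUnion] at h_lt
  obtain ⟨j, hj⟩ := lt_iSup_iff.1 h_lt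
  refine ⟨1 / ((j : ℝ) + 1), Nat.one_div_pos_of_nat, fun y hy hyE => ?_⟩
  have h_sub : u j ⊆ E ∩ ball y r := Set.inter_subset_inter_right E <|
    ball_subset_ball' (by linarith [mem_ball'.1 hy])
  have h_low := hyE r hr hrk
  rw [Measure.addHaar_ball_center, ← Measure.addHaar_ball_center volume x] at h_low
  exact hj.not_ge ((measure_mono h_sub).trans h_low)

theorem HasDensity.exists_mem_lowDensity (h : HasDensity E x 0) : ∃ k, x ∈ lowDensity E k := by
  have hc : (0 : ℝ) < 2⁻¹ * (1 / 96) ^ n := by positivity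
  obtain ⟨δ, hδ, h_small⟩ := (nhdsGT_basis (0 : ℝ)).eventually_iff.1 (h.eventually_lt_const hc)
  obtain ⟨k, hk⟩ := exists_nat_one_div_lt hδ
  refine ⟨k, fun r hr hrk => ?_⟩
  have h_lt := h_small (Set.mem_Ioo.2 ⟨hr, hrk.trans hk⟩)
  rw [div_lt_iff₀ (ENNReal.toReal_pos (measure_ball_pos _ _ hr).ne' measure_ball_lt_top.ne)] at h_lt
  have h_scale : volume (ball x (r / 96)) = ENNReal.ofReal ((1 / 96) ^ n) * volume (ball x r) := by
    rw [div_eq_mul_one_div, mul_comm, Measure.addHaar_ball_mul_of_pos _ _ (by norm_num),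
      finrank_euclideanSpace_fin, Measure.addHaar_ball_center _ x]
  rw [h_scale, ← ENNReal.toReal_le_toReal (measure_inter_lt_top_of_right_ne_top
    measure_ball_lt_top.ne).ne (by finiteness), ENNReal.toReal_mul, ENNReal.toReal_mul,
    ENNReal.toReal_ofReal (by positivity), ENNReal.toReal_inv, ENNReal.toReal_ofNat, ← mul_assoc]
  exact h_lt.le

theorem not_hasDensity_one_of_mem_lowDensity {k : ℕ} (hx : x ∈ lowDensity E k) :
    ¬ HasDensity E x 1 := by
  intro h
  have h_le : ∀ᶠ r in nhdsWithin (0 : ℝ) (Set.Ioi 0),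
      (volume (E ∩ ball x r)).toReal / (volume (ball x r)).toReal ≤ 2⁻¹ := by
    filter_upwards [Ioo_mem_nhdsGT (Nat.one_div_pos_of_nat (α := ℝ) (n := k))] with r hr
    rw [div_le_iff₀ (ENNReal.toReal_pos (measure_ball_pos _ _ hr.1).ne' measure_ball_lt_top.ne),
      ← ENNReal.toReal_ofNat, ← ENNReal.toReal_inv, ← ENNReal.toReal_mul]
    refine ENNReal.toReal_mono (by finiteness) ((hx r hr.1 hr.2).trans ?_)
    gcongr
    linarith [hr.1]
  exact absurd (le_of_tendsto h h_le) (by norm_num)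

theorem iUnion_lowDensity_preimage_eq {X : Type*} {f : X → EuclideanSpace ℝ (Fin n)}
    (h : ∀ u, HasDensity E (f u) 0 ∨ HasDensity E (f u) 1) :
    ⋃ k, f ⁻¹' lowDensity E k = {u | HasDensity E (f u) 0} := by
  ext u
  simp only [Set.mem_iUnion, Set.mem_preimage, Set.mem_ofPred_eq]
  exact ⟨fun ⟨k, hk⟩ => (h u).resolve_right (not_hasDensity_one_of_mem_lowDensity hk),
    HasDensity.exists_mem_lowDensity⟩

theorem iUnion_lowDensity_compl_preimage_eq {X : Type*} {f : X → EuclideanSpace ℝ (Fin n)}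
    (hE : MeasurableSet E) (h : ∀ u, HasDensity E (f u) 0 ∨ HasDensity E (f u) 1) :
    ⋃ k, f ⁻¹' lowDensity Eᶜ k = {u | HasDensity E (f u) 0}ᶜ := by
  rw [iUnion_lowDensity_preimage_eq fun u => ?_]
  · ext u
    rw [Set.mem_ofPred_eq, hasDensity_compl_zero_iff hE]
    exact ⟨fun h_one h_zero => zero_ne_one (h_zero.unique h_one), (h u).resolve_left⟩
  · rw [hasDensity_compl_zero_iff hE, hasDensity_compl_one_iff hE]
    exact (h u).symm

end Density

section Cones

open scoped Pointwise

variable {V : Type*} [NormedAddCommGroup V] [InnerProductSpace ℝ V]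

theorem smul_Ioi_zero_smul_set {a : ℝ} (ha : 0 < a) (W : Set V) :
    a • Set.Ioi (0 : ℝ) • W = Set.Ioi (0 : ℝ) • W := by
  rw [← smul_assoc, LinearOrderedField.smul_Ioi ha, mul_zero]

theorem abs_norm_sub_le_dist_smul {u : V} (hu : ‖u‖ = 1) {τ : ℝ} (hτ : 0 ≤ τ) (x : V) :
    |‖x‖ - τ| ≤ dist x (τ • u) := by
  simpa only [norm_smul, hu, mul_one, Real.norm_of_nonneg hτ, dist_eq_norm] using
    abs_norm_sub_norm_le x (τ • u)

theorem dist_normalize_le_of_dist_smul_le {x u : V} (hu : ‖u‖ = 1) {τ s : ℝ} (hτ : 0 < τ)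
    (hs : 0 ≤ s) (hs1 : s ≤ 1) (hx : dist x (τ • u) ≤ τ * (s / 8)) :
    dist (NormedSpace.normalize x) u ≤ s := by
  have h_abs := (abs_norm_sub_le_dist_smul hu hτ.le x).trans hx
  have hxτ : τ / 2 ≤ ‖x‖ := by nlinarith [(abs_le.1 h_abs).1]
  have h := dist_normalize_le (half_pos hτ) hxτ (y := τ • u) (by
    rw [norm_smul, hu, mul_one, Real.norm_of_nonneg hτ.le]
    exact half_le_self hτ.le)
  rw [NormedSpace.normalize_smul_of_pos hτ,
    NormedSpace.normalize_eq_self_of_norm_eq_one hu] at h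
  calc
    _ ≤ (τ / 2)⁻¹ * (τ * (s / 8)) := h.trans (by gcongr)
    _ = s / 4 := by
      field_simp
      ring
    _ ≤ s := by linarith

theorem abs_log_norm_sub_log_lt {x u : V} (hu : ‖u‖ = 1) {τ s : ℝ} (hτ : 0 < τ) (hs : 0 < s)
    (hs1 : s ≤ 1) (hx : dist x (τ • u) ≤ τ * (s / 8)) :
    |Real.log ‖x‖ - Real.log τ| < s / 4 := by
  have h_abs := (abs_norm_sub_le_dist_smul hu hτ.le x).trans hx
  obtain ⟨h_lower, h_upper⟩ := abs_le.1 h_abs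
  have hx0 : 0 < ‖x‖ := by nlinarith
  have h_le : Real.log (‖x‖ / τ) ≤ ‖x‖ / τ - 1 := Real.log_le_sub_one_of_pos (by positivity)
  have h_ge : Real.log (τ / ‖x‖) ≤ τ / ‖x‖ - 1 := Real.log_le_sub_one_of_pos (by positivity)
  rw [Real.log_div hx0.ne' hτ.ne'] at h_le
  rw [Real.log_div hτ.ne' hx0.ne'] at h_ge
  have h_div : ‖x‖ / τ < 1 + s / 4 := by
    rw [div_lt_iff₀ hτ]
    nlinarith [mul_pos hτ hs]
  have h_div' : τ / ‖x‖ < 1 + s / 4 := by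
    rw [div_lt_iff₀ hx0]
    nlinarith [mul_pos hτ hs]
  exact abs_lt.2 ⟨by linarith, by linarith⟩

theorem closedBall_smul_subset_ball {b u : V} (hb : b ≠ 0) (hu : ‖u‖ = 1) {τ s : ℝ} (hs : 0 < s)
    (hbu : dist (NormedSpace.normalize b) u ≤ s) (hτ_le : τ ≤ 5 / 2 * ‖b‖)
    (hτb : |τ - ‖b‖| ≤ 3 / 2 * s * ‖b‖) :
    closedBall (τ • u) (τ * (s / 8)) ⊆ ball b (3 * ‖b‖ * s) := by
  have hb0 : 0 < ‖b‖ := norm_pos_iff.2 hb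
  refine closedBall_subset_ball' ?_
  have h_radial : dist (τ • u) (‖b‖ • u) = |τ - ‖b‖| := by
    rw [dist_eq_norm, ← sub_smul, norm_smul, hu, mul_one, Real.norm_eq_abs]
  have h_angular : dist (‖b‖ • u) b ≤ ‖b‖ * s := by
    nth_rewrite 2 [← NormedSpace.norm_smul_normalize b]
    rw [dist_smul₀, norm_norm, dist_comm]
    gcongr
  nlinarith [dist_triangle (τ • u) (‖b‖ • u) b, mul_pos hb0 hs]

theorem abs_exp_mul_sub_one_le {ε s : ℝ} (hε : |ε| = 1) (hs : 0 ≤ s) (hs1 : s ≤ 1) :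
    |Real.exp (ε * (3 / 4 * s)) - 1| ≤ 3 / 2 * s := by
  have h_abs : |ε * (3 / 4 * s)| = 3 / 4 * s := by
    rw [abs_mul, hε, one_mul, abs_of_nonneg (by positivity)]
  have h := Real.abs_exp_sub_one_le (x := ε * (3 / 4 * s)) (by linarith)
  linarith

variable [FiniteDimensional ℝ V] [MeasurableSpace V] [BorelSpace V]

theorem exists_eventually_lt_volume_inter_closedBall [Nontrivial V] {C : Set V}
    (hC : volume C ≠ 0) {c : ℝ≥0∞} (hc : c < 1) :
    ∃ y ∈ C, y ≠ 0 ∧ ∀ᶠ r in nhdsWithin (0 : ℝ) (Set.Ioi 0),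
      c * volume (closedBall y r) < volume (C ∩ closedBall y r) := by
  obtain ⟨y, hyC, hy, hy0⟩ := Measure.exists_mem_of_measure_ne_zero_of_ae hC
    ((Besicovitch.ae_tendsto_measure_inter_div volume C).and (ae_restrict_of_ae
      (Measure.ae_ne volume 0)))
  refine ⟨y, hyC, hy0, ?_⟩
  filter_upwards [hy.eventually_const_lt hc, self_mem_nhdsWithin] with r hr (hr0 : 0 < r)
  rwa [ENNReal.lt_div_iff_mul_lt (Or.inl (measure_closedBall_pos _ _ hr0).ne')
    (Or.inl measure_closedBall_lt_top.ne)] at hr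

theorem exists_eventually_lt_volume_cone_inter_closedBall [Nontrivial V] {W : Set V}
    (hW : volume (Set.Ioi (0 : ℝ) • W) ≠ 0) {c : ℝ≥0∞} (hc : c < 1) :
    ∃ w ∈ W, w ≠ 0 ∧ ∀ᶠ s in nhdsWithin (0 : ℝ) (Set.Ioi 0), ∀ τ : ℝ, 0 < τ →
      c * volume (closedBall (0 : V) (τ * s)) <
        volume (Set.Ioi (0 : ℝ) • W ∩ closedBall (τ • NormedSpace.normalize w) (τ * s)) := by
  obtain ⟨y, hyW, hy0, hy⟩ := exists_eventually_lt_volume_inter_closedBall hW hc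
  obtain ⟨t, ht, w, hw, rfl⟩ := Set.mem_smul.1 hyW
  obtain ⟨δ, hδ, h_lt⟩ := (nhdsGT_basis (0 : ℝ)).eventually_iff.1 hy
  have hw0 : w ≠ 0 := right_ne_zero_of_smul hy0
  have hyn : 0 < ‖t • w‖ := norm_pos_iff.2 hy0
  refine ⟨w, hw, hw0, ?_⟩
  filter_upwards [Ioo_mem_nhdsGT (div_pos hδ hyn)] with s hs τ hτ
  have h := h_lt (Set.mem_Ioo.2 ⟨mul_pos hs.1 hyn, (lt_div_iff₀ hyn).1 hs.2⟩)
  set a := τ / ‖t • w‖ with ha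
  have ha0 : 0 < a := by positivity
  have h_center : a • t • w = τ • NormedSpace.normalize w := by
    rw [← NormedSpace.normalize_smul_of_pos ht w, NormedSpace.normalize, smul_smul τ, ha,
      div_eq_mul_inv]
  have h_radius : a * (s * ‖t • w‖) = τ * s := by
    rw [ha]
    field_simp
  have h_smul : a • (Set.Ioi (0 : ℝ) • W ∩ closedBall (t • w) (s * ‖t • w‖)) =
      Set.Ioi (0 : ℝ) • W ∩ closedBall (τ • NormedSpace.normalize w) (τ * s) := by
    rw [Set.smul_set_inter₀ ha0.ne', smul_Ioi_zero_smul_set ha0, smul_closedBall' ha0.ne',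
      Real.norm_of_nonneg ha0.le, h_center, h_radius]
  rw [← h_smul, Measure.addHaar_smul, abs_of_pos (by positivity), ← h_radius,
    Measure.addHaar_closedBall_mul_of_pos _ _ ha0, ← Measure.addHaar_closedBall_center _ (t • w),
    mul_left_comm]
  exact (ENNReal.mul_lt_mul_iff_right (ENNReal.ofReal_pos.2 (by positivity)).ne' ofReal_ne_top).2 h

end Cones

section Edges

open scoped Pointwise

variable {n : ℕ} {E : Set (EuclideanSpace ℝ (Fin n))}

/-- The points `x` of low density of `E` from which the ray through `x` leaves into a stretch of
points of density `1`: outward if `ε = 1` and inward if `ε = -1`. The numbers `p < q` bound the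
position `ε log ‖x‖` of `x` and that of the far end of the stretch. -/
def edgeSet (E : Set (EuclideanSpace ℝ (Fin n))) (k : ℕ) (ε p q : ℝ) :
    Set (EuclideanSpace ℝ (Fin n)) :=
  {x ∈ lowDensity E k | x ≠ 0 ∧ ε * Real.log ‖x‖ < p ∧ ∀ t : ℝ, 0 < t →
    ε * Real.log ‖t • x‖ ∈ Set.Ioo (ε * Real.log ‖x‖) q → HasDensity E (t • x) 1}

theorem exists_mem_edgeSet_almost_maximal {k : ℕ} {ε p q s : ℝ} (hs : 0 < s)
    {w : EuclideanSpace ℝ (Fin n)} (hw : w ∈ edgeSet E k ε p q) :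
    ∃ b ∈ edgeSet E k ε p q, dist (NormedSpace.normalize b) (NormedSpace.normalize w) ≤ s ∧
      ∀ b' ∈ edgeSet E k ε p q, dist (NormedSpace.normalize b') (NormedSpace.normalize w) ≤ s →
        ε * Real.log ‖b'‖ < ε * Real.log ‖b‖ + s / 4 := by
  set S := (fun b => ε * Real.log ‖b‖) ''
    {b ∈ edgeSet E k ε p q | dist (NormedSpace.normalize b) (NormedSpace.normalize w) ≤ s}
  have h_ne : S.Nonempty := ⟨_, w, ⟨hw, (dist_self _).trans_le hs.le⟩, rfl⟩
  have h_bdd : BddAbove S := ⟨p, by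
    rintro _ ⟨b, hb, rfl⟩
    exact hb.1.2.2.1.le⟩
  obtain ⟨_, ⟨b, hb, rfl⟩, h_lt⟩ := exists_lt_of_lt_csSup h_ne
    (sub_lt_self (sSup S) (show 0 < s / 4 by positivity))
  exact ⟨b, hb.1, hb.2, fun b' hb' hd =>
    (le_csSup h_bdd ⟨b', ⟨hb', hd⟩, rfl⟩).trans_lt (sub_lt_iff_lt_add.1 h_lt)⟩

theorem hasDensity_one_of_mem_cone_edgeSet {k : ℕ} {ε p q s : ℝ} (hε : |ε| = 1) (hs : 0 < s)
    (hs1 : s ≤ 1) (hsq : p + s ≤ q) {u b x : EuclideanSpace ℝ (Fin n)} (hu : ‖u‖ = 1)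
    (hb : b ∈ edgeSet E k ε p q)
    (h_max : ∀ b' ∈ edgeSet E k ε p q, dist (NormedSpace.normalize b') u ≤ s →
      ε * Real.log ‖b'‖ < ε * Real.log ‖b‖ + s / 4)
    (hx : x ∈ Set.Ioi (0 : ℝ) • edgeSet E k ε p q) {τ : ℝ}
    (hτ : τ = Real.exp (ε * (3 / 4 * s)) * ‖b‖) (hxτ : dist x (τ • u) ≤ τ * (s / 8)) :
    HasDensity E x 1 := by
  obtain ⟨t, (ht : 0 < t), b', hb', rfl⟩ := Set.mem_smul.1 hx
  have hb0 : 0 < ‖b‖ := norm_pos_iff.2 hb.2.1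
  have hτ0 : 0 < τ := hτ ▸ by positivity
  have h_dir := dist_normalize_le_of_dist_smul_le hu hτ0 hs.le hs1 hxτ
  rw [NormedSpace.normalize_smul_of_pos ht] at h_dir
  have h_log_τ : ε * Real.log τ = 3 / 4 * s + ε * Real.log ‖b‖ := by
    rw [hτ, Real.log_mul (Real.exp_ne_zero _) hb0.ne', Real.log_exp, mul_add, ← mul_assoc,
      ← abs_mul_abs_self ε, hε, one_mul, one_mul]
  have h_near : |ε * Real.log ‖t • b'‖ - ε * Real.log τ| < s / 4 := by
    rw [← mul_sub, abs_mul, hε, one_mul]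
    exact abs_log_norm_sub_log_lt hu hτ0 hs hs1 hxτ
  obtain ⟨h_lower, h_upper⟩ := abs_lt.1 h_near
  refine hb'.2.2.2 t ht ⟨?_, ?_⟩
  · linarith [h_max b' hb' h_dir]
  · linarith [hb.2.2.1]

theorem volume_le_of_subset_ball_of_mem_lowDensity (hE : MeasurableSet E) {k : ℕ}
    {b : EuclideanSpace ℝ (Fin n)} (hb : b ∈ lowDensity E k) {S : Set (EuclideanSpace ℝ (Fin n))}
    (hS : ∀ x ∈ S, HasDensity E x 1) {ρ r : ℝ} (hρ : 0 < ρ) (hρk : ρ < 1 / ((k : ℝ) + 1))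
    (hSb : S ⊆ ball b ρ) (hρr : ρ / 96 ≤ r) : volume S ≤ 2⁻¹ * volume (ball b r) :=
  calc
    volume S ≤ volume (E ∩ S) := volume_le_inter_of_hasDensity_one hE hS
    _ ≤ volume (E ∩ ball b ρ) := by gcongr
    _ ≤ 2⁻¹ * volume (ball b (ρ / 96)) := hb ρ hρ hρk
    _ ≤ 2⁻¹ * volume (ball b r) := by gcongr

theorem norm_le_of_mem_edgeSet {k : ℕ} {ε p q c : ℝ} (hε : |ε| = 1)
    {b : EuclideanSpace ℝ (Fin n)} (hb : b ∈ edgeSet E k ε p q) (hc : c ≤ ε * Real.log ‖b‖) :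
    ‖b‖ ≤ Real.exp (max p (-c)) := by
  rw [← Real.log_le_iff_le_exp (norm_pos_iff.2 hb.2.1), le_max_iff]
  rcases eq_or_eq_neg_of_abs_eq hε with rfl | rfl
  · exact Or.inl (by linarith [hb.2.2.1])
  · exact Or.inr (by linarith)

theorem exists_volume_cone_edgeSet_inter_closedBall_le (hE : MeasurableSet E) {k : ℕ}
    {ε p q s : ℝ} (hε : |ε| = 1) (hs : 0 < s) (hs1 : s ≤ 1) (hsq : p + s ≤ q)
    {u b : EuclideanSpace ℝ (Fin n)} (hu : ‖u‖ = 1) (hb : b ∈ edgeSet E k ε p q)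
    (hbu : dist (NormedSpace.normalize b) u ≤ s) (hbk : 3 * ‖b‖ * s < 1 / ((k : ℝ) + 1))
    (h_max : ∀ b' ∈ edgeSet E k ε p q, dist (NormedSpace.normalize b') u ≤ s →
      ε * Real.log ‖b'‖ < ε * Real.log ‖b‖ + s / 4) :
    ∃ τ : ℝ, 0 < τ ∧ volume (Set.Ioi (0 : ℝ) • edgeSet E k ε p q ∩
      closedBall (τ • u) (τ * (s / 8))) ≤ 2⁻¹ * volume (ball b (τ * (s / 8))) := by
  have hb0 : 0 < ‖b‖ := norm_pos_iff.2 hb.2.1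
  set a := Real.exp (ε * (3 / 4 * s))
  have ha : |a - 1| ≤ 3 / 2 * s := abs_exp_mul_sub_one_le hε hs.le hs1
  have ha_ge : 1 / 4 ≤ a := by
    have h_abs : |ε * (3 / 4 * s)| ≤ 3 / 4 := by
      rw [abs_mul, hε, abs_of_pos (by positivity)]
      linarith
    linarith [Real.add_one_le_exp (ε * (3 / 4 * s)), neg_le_of_abs_le h_abs]
  have h_sub : closedBall ((a * ‖b‖) • u) (a * ‖b‖ * (s / 8)) ⊆ ball b (3 * ‖b‖ * s) := by
    refine closedBall_smul_subset_ball hb.2.1 hu hs hbu ?_ ?_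
    · nlinarith [(abs_le.1 ha).2]
    · rw [← sub_one_mul, abs_mul, abs_norm]
      gcongr
  refine ⟨a * ‖b‖, by positivity, volume_le_of_subset_ball_of_mem_lowDensity hE hb.1
    (fun x hx => hasDensity_one_of_mem_cone_edgeSet hε hs hs1 hsq hu hb h_max hx.1 rfl hx.2)
    (by positivity) hbk (Set.inter_subset_right.trans h_sub) ?_⟩
  nlinarith [mul_pos hb0 hs]

theorem volume_cone_edgeSet [NeZero n] (hE : MeasurableSet E) (k : ℕ) {ε p q : ℝ} (hε : |ε| = 1)
    (hpq : p < q) : volume (Set.Ioi (0 : ℝ) • edgeSet E k ε p q) = 0 := by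
  by_contra h_ne
  obtain ⟨w, hw, hw0, h_dense⟩ := exists_eventually_lt_volume_cone_inter_closedBall h_ne
    (ENNReal.inv_lt_one.2 one_lt_two)
  have hu : ‖NormedSpace.normalize w‖ = 1 := NormedSpace.norm_normalize hw0
  set M := Real.exp (max p (-(ε * Real.log ‖w‖ - 1)))
  have h_scale : 0 < min 1 (min (q - p) (1 / ((k : ℝ) + 1) / (3 * M))) / 8 :=
    have := sub_pos.2 hpq
    by positivity
  obtain ⟨s, h_dense, hs_mem⟩ := (h_dense.and (Ioo_mem_nhdsGT h_scale)).exists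
  obtain ⟨s, rfl⟩ : ∃ s', s = s' / 8 := ⟨8 * s, by ring⟩
  obtain ⟨hs, hs_lt⟩ : 0 < s ∧ s < _ := by
    simpa only [Set.mem_Ioo, Nat.ofNat_pos, div_pos_iff_of_pos_right,
      div_lt_div_iff_of_pos_right] using hs_mem
  obtain ⟨hs1, hsq, hsM⟩ : s < 1 ∧ s < q - p ∧ _ := by simpa only [lt_min_iff] using hs_lt
  obtain ⟨b, hb, hbw, h_max⟩ := exists_mem_edgeSet_almost_maximal hs hw
  have hbM : ‖b‖ ≤ M := norm_le_of_mem_edgeSet hε hb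
    (by linarith [h_max w hw ((dist_self _).trans_le hs.le)])
  have hbk : 3 * ‖b‖ * s < 1 / ((k : ℝ) + 1) := by
    rw [lt_div_iff₀ (by positivity)] at hsM
    nlinarith
  obtain ⟨τ, hτ, h_le⟩ := exists_volume_cone_edgeSet_inter_closedBall_le hE hε hs hs1.le
    (by linarith) hu hb hbw hbk h_max
  rw [Measure.addHaar_ball_center, ← Measure.addHaar_closedBall_eq_addHaar_ball] at h_le
  exact (h_dense τ hτ).not_ge h_le

end Edges

section Rays

open scoped Pointwise

variable {n : ℕ} {E : Set (EuclideanSpace ℝ (Fin n))}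

theorem log_norm_smul_lt_log_norm_smul_iff {V : Type*} [NormedAddCommGroup V] [NormedSpace ℝ V]
    {x : V} (hx : x ≠ 0) {s t : ℝ} (hs : 0 < s) (ht : 0 < t) :
    Real.log ‖s • x‖ < Real.log ‖t • x‖ ↔ s < t := by
  have hx' : 0 < ‖x‖ := norm_pos_iff.2 hx
  rw [norm_smul, norm_smul, Real.norm_of_nonneg hs.le, Real.norm_of_nonneg ht.le,
    Real.log_lt_log_iff (by positivity) (by positivity), mul_lt_mul_iff_left₀ hx']

theorem exists_mem_cone_edgeSet {x : EuclideanSpace ℝ (Fin n)} (hx : x ≠ 0) {a b : ℝ} (ha : 0 < a)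
    (hb : 0 < b) (hab : a ≠ b) {k : ℕ} (hak : a • x ∈ lowDensity E k)
    (h : ∀ t ∈ Set.uIoo a b, HasDensity E (t • x) 1) :
    ∃ ε : ℝ, |ε| = 1 ∧ ∃ p q : ℚ, p < q ∧ x ∈ Set.Ioi (0 : ℝ) • edgeSet E k ε p q := by
  obtain ⟨ε, hε, h_lt, h_uIoo⟩ : ∃ ε : ℝ, |ε| = 1 ∧
      ε * Real.log ‖a • x‖ < ε * Real.log ‖b • x‖ ∧ ∀ t : ℝ, 0 < t →
        ε * Real.log ‖t • x‖ ∈ Set.Ioo (ε * Real.log ‖a • x‖) (ε * Real.log ‖b • x‖) →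
          t ∈ Set.uIoo a b := by
    have h_iff := @log_norm_smul_lt_log_norm_smul_iff _ _ _ _ hx
    rcases hab.lt_or_gt with hlt | hgt
    · refine ⟨1, abs_one, ?_, fun t ht ht_mem => ?_⟩
      · rwa [one_mul, one_mul, h_iff ha hb]
      · rwa [one_mul, one_mul, one_mul, Set.mem_Ioo, h_iff ha ht, h_iff ht hb, ← Set.mem_Ioo,
          ← Set.uIoo_of_lt hlt] at ht_mem
    · refine ⟨-1, by rw [abs_neg, abs_one], ?_, fun t ht ht_mem => ?_⟩
      · rwa [neg_one_mul, neg_one_mul, neg_lt_neg_iff, h_iff hb ha]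
      · rwa [neg_one_mul, neg_one_mul, neg_one_mul, Set.mem_Ioo, neg_lt_neg_iff, neg_lt_neg_iff,
          h_iff ht ha, h_iff hb ht, and_comm, ← Set.mem_Ioo, ← Set.uIoo_of_gt hgt] at ht_mem
  obtain ⟨p, hap, hpb⟩ := exists_rat_btwn h_lt
  obtain ⟨q, hpq, hqb⟩ := exists_rat_btwn hpb
  refine ⟨ε, hε, p, q, mod_cast hpq, Set.mem_smul.2 ⟨a⁻¹, inv_pos.2 ha, a • x,
    ⟨hak, smul_ne_zero ha.ne' hx, hap, fun t ht ht_mem => ?_⟩, inv_smul_smul₀ ha.ne' x⟩⟩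
  rw [smul_smul] at ht_mem ⊢
  exact h _ (h_uIoo _ (mul_pos ht ha) ⟨ht_mem.1, ht_mem.2.trans hqb⟩)

theorem ae_forall_notMem_cone_edgeSet [NeZero n] (hE : MeasurableSet E) :
    ∀ᵐ x, ∀ ε : ℝ, |ε| = 1 → ∀ (k : ℕ) (p q : ℚ), p < q →
      x ∉ Set.Ioi (0 : ℝ) • edgeSet E k ε p q := by
  have h_null : ∀ ε : ℝ, |ε| = 1 → ∀ᵐ x, ∀ (k : ℕ) (p q : ℚ), p < q →
      x ∉ Set.Ioi (0 : ℝ) • edgeSet E k ε p q := fun ε hε => by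
    simp only [ae_all_iff]
    exact fun k p q hpq =>
      measure_eq_zero_iff_ae_notMem.1 (volume_cone_edgeSet hE k hε (mod_cast hpq))
  filter_upwards [h_null 1 abs_one, h_null (-1) (by rw [abs_neg, abs_one])] with x h_one h_neg ε hε
  rcases eq_or_eq_neg_of_abs_eq hε with rfl | rfl
  exacts [h_one, h_neg]

theorem ae_exists_not_hasDensity_one [NeZero n] (hE : MeasurableSet E) (hfin : volume E ≠ ∞) :
    ∀ᵐ x, ∃ l : ℝ, 1 ≤ l ∧ ¬ HasDensity E (l • x) 1 := by
  set M := {x | ∀ l : ℝ, 1 ≤ l → HasDensity E (l • x) 1}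
  have hM_fin : volume M ≠ ∞ := by
    refine ne_top_of_le_ne_top hfin ((volume_le_inter_of_hasDensity_one hE fun x hx => ?_).trans
      (measure_mono (Set.inter_subset_left (t := M))))
    simpa only [one_smul] using hx 1 le_rfl
  have h_double : (2 : ℝ) • M ⊆ M := by
    rintro _ ⟨x, hx, rfl⟩ l hl
    rw [smul_smul]
    exact hx (l * 2) (by linarith)
  have hM : volume M = 0 := by
    by_contra hM
    have h_le := measure_mono (μ := volume) h_double
    rw [Measure.addHaar_smul, finrank_euclideanSpace_fin] at h_le
    refine h_le.not_gt ?_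
    nth_rewrite 1 [← one_mul (volume M)]
    rw [ENNReal.mul_lt_mul_iff_left hM hM_fin, ENNReal.one_lt_ofReal, abs_of_pos (by positivity)]
    exact one_lt_pow₀ _root_.one_lt_two (NeZero.ne n)
  filter_upwards [measure_eq_zero_iff_ae_notMem.1 hM] with x hx
  simpa only [M, Set.mem_ofPred_eq, not_forall, exists_prop] using hx

theorem mem_ball_of_mem_uIoo_max {c l q t : ℝ} (ht : t ∈ Set.uIoo (max c l) (max c q)) :
    max c t = t ∧ t ∈ ball q (dist q l) := by
  rw [mem_ball, Real.dist_eq, Real.dist_eq]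
  rcases le_total l q with h | h
  · rw [Set.uIoo_of_le (max_le_max_left c h), Set.mem_Ioo, max_lt_iff, lt_max_iff] at ht
    obtain ⟨⟨hct, hlt⟩, htc | htq⟩ := ht
    · exact absurd htc hct.not_gt
    · refine ⟨max_eq_right hct.le, ?_⟩
      rw [abs_of_neg (by linarith), abs_of_nonneg (by linarith)]
      linarith
  · rw [Set.uIoo_of_ge (max_le_max_left c h), Set.mem_Ioo, max_lt_iff, lt_max_iff] at ht
    obtain ⟨⟨hct, hqt⟩, htc | htl⟩ := ht
    · exact absurd htc hct.not_gt
    · refine ⟨max_eq_right hct.le, ?_⟩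
      rw [abs_of_pos (by linarith), abs_of_nonpos (by linarith)]
      linarith

theorem max_ne_and_hasDensity_one_of_mem_uIoo {x : EuclideanSpace ℝ (Fin n)} {k : ℕ} {c l q : ℝ}
    (hql : q ≠ l) (hl : max c l • x ∈ lowDensity E k)
    (hq : ∀ t ∈ ball q (dist q l), HasDensity E (max c t • x) 1) :
    max c l ≠ max c q ∧ ∀ t ∈ Set.uIoo (max c l) (max c q), HasDensity E (t • x) 1 := by
  refine ⟨fun h => not_hasDensity_one_of_mem_lowDensity hl ?_, fun t ht => ?_⟩
  · rw [h]
    exact hq q (mem_ball_self (dist_pos.2 hql))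
  · obtain ⟨h_max, h_mem⟩ := mem_ball_of_mem_uIoo_max ht
    exact h_max ▸ hq t h_mem

theorem exists_mem_lowDensity_of_forall_hasDensity (hE : MeasurableSet E)
    {x : EuclideanSpace ℝ (Fin n)} (hx : HasDensity E x 1)
    (hl : ∃ l : ℝ, 1 ≤ l ∧ ¬ HasDensity E (l • x) 1)
    (h : ∀ l : ℝ, 1 ≤ l → HasDensity E (l • x) 0 ∨ HasDensity E (l • x) 1) :
    ∃ (k : ℕ) (a b : ℝ), 0 < a ∧ 0 < b ∧ a ≠ b ∧
      (a • x ∈ lowDensity E k ∧ (∀ t ∈ Set.uIoo a b, HasDensity E (t • x) 1) ∨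
        a • x ∈ lowDensity Eᶜ k ∧ ∀ t ∈ Set.uIoo a b, HasDensity Eᶜ (t • x) 1) := by
  let f : ℝ → EuclideanSpace ℝ (Fin n) := fun t => max 1 t • x
  have hf : Continuous f := by fun_prop
  have h_density : ∀ t, HasDensity E (f t) 0 ∨ HasDensity E (f t) 1 :=
    fun t => h _ (le_max_left 1 t)
  have h_low := iUnion_lowDensity_preimage_eq h_density
  have h_low_compl := iUnion_lowDensity_compl_preimage_eq hE h_density
  obtain ⟨k, l, q, hql, h_or⟩ := exists_ball_subset_of_iUnion_isClosed
    (fun k => (isClosed_lowDensity E k).preimage hf)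
    (fun k => (isClosed_lowDensity Eᶜ k).preimage hf) (by rw [h_low, h_low_compl])
    (by
      obtain ⟨l, hl1, hl⟩ := hl
      rw [h_low]
      refine ⟨l, ?_⟩
      simpa only [f, Set.mem_ofPred_eq, max_eq_right hl1] using (h l hl1).resolve_right hl)
    (by
      rw [h_low_compl]
      refine ⟨1, fun h_zero => zero_ne_one (h_zero.unique ?_)⟩
      rwa [show f 1 = x by simp only [f, max_self, one_smul]])
  refine ⟨k, max 1 l, max 1 q, by positivity, by positivity, ?_⟩
  rcases h_or with ⟨hl, hq⟩ | ⟨hl, hq⟩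
  · rw [h_low_compl] at hq
    obtain ⟨h_ne, h_uIoo⟩ := max_ne_and_hasDensity_one_of_mem_uIoo hql hl
      fun t ht => (h_density t).resolve_left (hq ht)
    exact ⟨h_ne, Or.inl ⟨hl, h_uIoo⟩⟩
  · rw [h_low] at hq
    obtain ⟨h_ne, h_uIoo⟩ := max_ne_and_hasDensity_one_of_mem_uIoo hql hl
      fun t ht => (hasDensity_compl_one_iff hE).2 (hq ht)
    exact ⟨h_ne, Or.inr ⟨hl, h_uIoo⟩⟩

theorem ae_exists_smul_mem_essBoundary [NeZero n] (hE : MeasurableSet E) (hfin : volume E ≠ ∞) :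
    ∀ᵐ x, x ∈ E → ∃ l : ℝ, 1 ≤ l ∧ l • x ∈ essBoundary E := by
  filter_upwards [Measure.ae_ne volume 0, ae_hasDensity_one hE,
    ae_exists_not_hasDensity_one hE hfin, ae_forall_notMem_cone_edgeSet hE,
    ae_forall_notMem_cone_edgeSet hE.compl] with x hx0 h_one h_leave h_edge h_edge_compl hxE
  by_contra! h_notMem
  have h_density : ∀ l : ℝ, 1 ≤ l → HasDensity E (l • x) 0 ∨ HasDensity E (l • x) 1 :=
    fun l hl => by
      simpa only [essBoundary, Set.mem_ofPred_eq, not_and_or, not_not] using h_notMem l hl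
  obtain ⟨k, a, b, ha, hb, hab, ⟨hak, h⟩ | ⟨hak, h⟩⟩ :=
    exists_mem_lowDensity_of_forall_hasDensity hE (h_one hxE) h_leave h_density
  · obtain ⟨ε, hε, p, q, hpq, h_mem⟩ := exists_mem_cone_edgeSet hx0 ha hb hab hak h
    exact h_edge ε hε k p q hpq h_mem
  · obtain ⟨ε, hε, p, q, hpq, h_mem⟩ := exists_mem_cone_edgeSet hx0 ha hb hab hak h
    exact h_edge_compl ε hε k p q hpq h_mem

end Rays

section CalibrationExchange

open Module

variable {V : Type*} [NormedAddCommGroup V] [InnerProductSpace ℝ V] [FiniteDimensional ℝ V]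
  [MeasurableSpace V] [BorelSpace V]

theorem lintegral_ball_calibrationDivergence_le {R : ℝ} {E : Set V} (hE : MeasurableSet E)
    (hER : volume E = volume (ball (0 : V) R)) :
    ∫⁻ x in ball (0 : V) R, calibrationDivergence R x ≤
      (∫⁻ x in E, calibrationDivergence R x) +
        ENNReal.ofReal ((finrank ℝ V + 1) / R ^ 2) * radialAsymmetry R E := by
  set d : ℝ := (finrank ℝ V : ℝ)
  have hbath := bathtub_lintegral_symmDiff_le (f := calibrationDivergence R) (k := 0)
    (c := ENNReal.ofReal ((2 * d * R - (d + 1) * R) / R ^ 2))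
    (e := fun x => ENNReal.ofReal ((d + 1) / R ^ 2 * |‖x‖ - R|))
    hE measurableSet_ball hER measure_ball_lt_top.ne (by fun_prop) ENNReal.ofReal_ne_top
    (fun x _ => ?_) (fun x _ => ?_)
  · rw [lintegral_const_mul_abs_norm_sub (by positivity)] at hbath
    simpa only [Pi.zero_apply, lintegral_zero, add_zero] using hbath
  all_goals
    rw [Pi.zero_apply, add_zero]
    refine (ENNReal.ofReal_le_ofReal ?_).trans ENNReal.ofReal_add_le
    rw [div_mul_eq_mul_div, ← add_div]
    gcongr
  · nlinarith [neg_abs_le (‖x‖ - R)]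
  · nlinarith [le_abs_self (‖x‖ - R)]

end CalibrationExchange

section Perimeter

open scoped Pointwise

variable {n : ℕ}

theorem hasDensity_one_of_mem_interior {E : Set (EuclideanSpace ℝ (Fin n))}
    {x : EuclideanSpace ℝ (Fin n)} (hx : x ∈ interior E) : HasDensity E x 1 := by
  obtain ⟨δ, hδ, h_sub⟩ := Metric.mem_nhds_iff.1 (mem_interior_iff_mem_nhds.1 hx)
  refine tendsto_const_nhds.congr' ?_
  filter_upwards [Ioo_mem_nhdsGT hδ] with r hr
  rw [Set.inter_eq_right.2 ((ball_subset_ball hr.2.le).trans h_sub), div_self]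
  exact (ENNReal.toReal_pos (measure_ball_pos _ _ hr.1).ne' measure_ball_lt_top.ne).ne'

theorem hasDensity_zero_of_notMem_closure {E : Set (EuclideanSpace ℝ (Fin n))}
    {x : EuclideanSpace ℝ (Fin n)} (hx : x ∉ closure E) : HasDensity E x 0 := by
  obtain ⟨δ, hδ, h_disj⟩ := Metric.mem_nhds_iff.1
    (isClosed_closure.isOpen_compl.mem_nhds hx)
  refine tendsto_const_nhds.congr' ?_
  filter_upwards [Ioo_mem_nhdsGT hδ] with r hr
  have h_inter : E ∩ ball x r = ∅ := Set.disjoint_iff_inter_eq_empty.1 (Set.disjoint_left.2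
    fun y hyE hy => h_disj (ball_subset_ball hr.2.le hy) (subset_closure hyE))
  rw [h_inter, measure_empty, ENNReal.toReal_zero, zero_div]

theorem essBoundary_subset_frontier (E : Set (EuclideanSpace ℝ (Fin n))) :
    essBoundary E ⊆ frontier E := fun _ hx =>
  ⟨not_not.1 (mt hasDensity_zero_of_notMem_closure hx.1),
    mt hasDensity_one_of_mem_interior hx.2⟩

variable [NeZero n]

theorem perimeter_ball_le {R : ℝ} (hR : 0 < R) :
    perimeter (ball (0 : EuclideanSpace ℝ (Fin n)) R) ≤
      ENNReal.ofReal (R ^ ((n : ℝ) - 1)) *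
        μH[(n : ℝ) - 1] (sphere (0 : EuclideanSpace ℝ (Fin n)) 1) := by
  have hn : (0 : ℝ) ≤ (n : ℝ) - 1 := sub_nonneg.2 (mod_cast NeZero.one_le)
  have h_frontier : frontier (ball (0 : EuclideanSpace ℝ (Fin n)) R) = R • sphere 0 1 := by
    rw [frontier_ball 0 hR.ne', _root_.smul_sphere _ _ zero_le_one, smul_zero,
      Real.norm_of_nonneg hR.le, mul_one]
  calc
    _ ≤ μH[(n : ℝ) - 1] (R • sphere (0 : EuclideanSpace ℝ (Fin n)) 1) :=
      measure_mono (h_frontier ▸ essBoundary_subset_frontier _)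
    _ = _ := by
      rw [Measure.hausdorffMeasure_smul₀ hn hR.ne', ENNReal.smul_def, smul_eq_mul,
        ENNReal.coe_rpow_of_nonneg _ hn, ← enorm_eq_nnnorm, Real.enorm_of_nonneg hR.le,
        ENNReal.ofReal_rpow_of_pos hR]

theorem perimeter_ball_ne_top {R : ℝ} (hR : 0 < R) :
    perimeter (ball (0 : EuclideanSpace ℝ (Fin n)) R) ≠ ∞ := by
  have h := hausdorffMeasure_unitSphere_lt_top (V := EuclideanSpace ℝ (Fin n))
  rw [finrank_euclideanSpace_fin] at h
  exact ne_top_of_le_ne_top (ENNReal.mul_ne_top ofReal_ne_top h.ne) (perimeter_ball_le hR)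

theorem perimeter_ball_mul_le {R : ℝ} (hR : 0 < R) {E : Set (EuclideanSpace ℝ (Fin n))}
    (hE : MeasurableSet E)
    (hER : volume E = volume (ball (0 : EuclideanSpace ℝ (Fin n)) R)) :
    n * volume (ball (0 : EuclideanSpace ℝ (Fin n)) 1) *
        perimeter (ball (0 : EuclideanSpace ℝ (Fin n)) R) ≤
      n * volume (ball (0 : EuclideanSpace ℝ (Fin n)) 1) * perimeter E +
        ENNReal.ofReal ((n + 1) / R ^ 2) * radialAsymmetry R E *
          μH[(n : ℝ) - 1] (sphere (0 : EuclideanSpace ℝ (Fin n)) 1) := by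
  have h_ball := lintegral_ball_calibrationDivergence (V := EuclideanSpace ℝ (Fin n)) hR
  have h_exchange := lintegral_ball_calibrationDivergence_le hE hER
  have h_calibration := lintegral_mul_hausdorffMeasure_unitSphere_le
    (fun T hT ρ hρ => lintegral_sector_calibrationDivergence_le hT hR hρ)
    (ae_exists_smul_mem_essBoundary hE (hER ▸ measure_ball_lt_top.ne))
  rw [finrank_euclideanSpace_fin] at h_ball h_exchange h_calibration
  set H := μH[(n : ℝ) - 1] (sphere (0 : EuclideanSpace ℝ (Fin n)) 1)
  set κ := volume (ball (0 : EuclideanSpace ℝ (Fin n)) 1)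
  calc
    n * κ * perimeter (ball (0 : EuclideanSpace ℝ (Fin n)) R)
      ≤ n * κ * (ENNReal.ofReal (R ^ ((n : ℝ) - 1)) * H) := by
        gcongr
        exact perimeter_ball_le hR
    _ = (∫⁻ x in ball (0 : EuclideanSpace ℝ (Fin n)) R, calibrationDivergence R x) * H := by
      rw [h_ball, ENNReal.ofReal_mul (by positivity), ENNReal.ofReal_natCast]
      ring
    _ ≤ ((∫⁻ x in E, calibrationDivergence R x) +
          ENNReal.ofReal ((n + 1) / R ^ 2) * radialAsymmetry R E) * H := by gcongr
    _ ≤ n * κ * perimeter E +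
          ENNReal.ofReal ((n + 1) / R ^ 2) * radialAsymmetry R E * H := by
      rw [add_mul]
      exact add_le_add h_calibration le_rfl

theorem exists_perimeter_ball_le : ∃ C : ℝ, 0 ≤ C ∧ ∀ R : ℝ, 0 < R →
    ∀ E : Set (EuclideanSpace ℝ (Fin n)), MeasurableSet E →
      volume E = volume (ball (0 : EuclideanSpace ℝ (Fin n)) R) →
      perimeter (ball (0 : EuclideanSpace ℝ (Fin n)) R) ≤
        perimeter E + ENNReal.ofReal (C / R ^ 2) * radialAsymmetry R E := by
  have hH := hausdorffMeasure_unitSphere_lt_top (V := EuclideanSpace ℝ (Fin n))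
  rw [finrank_euclideanSpace_fin] at hH
  set H := μH[(n : ℝ) - 1] (sphere (0 : EuclideanSpace ℝ (Fin n)) 1)
  set κ := volume (ball (0 : EuclideanSpace ℝ (Fin n)) 1)
  have hκ : κ ≠ 0 := (measure_ball_pos _ _ one_pos).ne'
  have hnκ : n * κ ≠ 0 := mul_ne_zero (NeZero.ne _) hκ
  have hnκ_top : n * κ ≠ ∞ := ENNReal.mul_ne_top (natCast_ne_top n) measure_ball_lt_top.ne
  obtain ⟨c, hc, hcH⟩ : ∃ c : ℝ, 0 ≤ c ∧ n * κ * ENNReal.ofReal c = H :=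
    ⟨(H / (n * κ)).toReal, ENNReal.toReal_nonneg, by
      rw [ENNReal.ofReal_toReal (ENNReal.div_ne_top hH.ne hnκ),
        ENNReal.mul_div_cancel hnκ hnκ_top]⟩
  refine ⟨(n + 1) * c, by positivity, fun R hR E hE hER => ?_⟩
  rw [← ENNReal.mul_le_mul_iff_right hnκ hnκ_top]
  calc
    _ ≤ n * κ * perimeter E + ENNReal.ofReal ((n + 1) / R ^ 2) * radialAsymmetry R E * H :=
      perimeter_ball_mul_le hR hE hER
    _ = n * κ * (perimeter E + ENNReal.ofReal ((n + 1) * c / R ^ 2) * radialAsymmetry R E) := by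
      rw [← hcH, mul_div_right_comm, ENNReal.ofReal_mul (by positivity)]
      ring

end Perimeter

section TotalEnergy

variable {n : ℕ} {α β A : ℝ}

theorem exists_forall_gt_div_sq_add_mul_rpow_le {C₁ C₂ : ℝ} (hα : 1 ≤ α) (hαβ : α < β)
    (hA : 0 < A) (hC₁ : 0 ≤ C₁) : ∃ R₀ : ℝ, 1 ≤ R₀ ∧ ∀ R : ℝ, R₀ < R →
      C₁ / R ^ 2 + C₂ * R ^ (α - 1) + 1 ≤ A * R ^ (β - 1) := by
  obtain ⟨R₁, hR₁⟩ := eventually_atTop.1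
    ((tendsto_rpow_atTop (sub_pos.2 hαβ)).eventually_ge_atTop ((C₁ + C₂ + 1) / A))
  refine ⟨max 1 R₁, le_max_left 1 R₁, fun R hR => ?_⟩
  obtain ⟨hR1, hRR₁⟩ := max_lt_iff.1 hR
  have h_pow : 1 ≤ R ^ (α - 1) := Real.one_le_rpow hR1.le (sub_nonneg.2 hα)
  have h_growth : C₁ + C₂ + 1 ≤ R ^ (β - α) * A := (div_le_iff₀ hA).1 (hR₁ R hRR₁.le)
  have h_perimeter : C₁ / R ^ 2 ≤ C₁ := div_le_self hC₁ (one_le_pow₀ hR1.le)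
  calc
    C₁ / R ^ 2 + C₂ * R ^ (α - 1) + 1 ≤ (C₁ + C₂ + 1) * R ^ (α - 1) := by nlinarith
    _ ≤ R ^ (β - α) * A * R ^ (α - 1) := by gcongr
    _ = A * (R ^ (β - α) * R ^ (α - 1)) := by ring
    _ = A * R ^ (β - 1) := by rw [← Real.rpow_add (one_pos.trans hR1), sub_add_sub_cancel]

theorem add_le_of_add_mul_le_of_add_add_one_le {p p' v v' u u' a b c D : ℝ≥0∞}
    (hp : p ≤ p' + a * D) (hv : v ≤ v' + b * D) (hu : u + c * D ≤ u') (ha : a ≠ ∞) (hb : b ≠ ∞)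
    (habc : a + b + 1 ≤ c) : p + v + u + D ≤ p' + v' + u' := by
  rcases eq_or_ne D ∞ with rfl | hD
  · have h_top : u' = ∞ := by
      rw [eq_top_iff]
      calc
        ∞ = 1 * ∞ := (one_mul _).symm
        _ ≤ c * ∞ := by
          gcongr
          exact le_add_self.trans habc
        _ ≤ u' := le_add_self.trans hu
    rw [h_top, add_top, add_top]
  · rw [← ENNReal.add_le_add_iff_right
      (ENNReal.mul_ne_top (ENNReal.add_ne_top.2 ⟨ha, hb⟩) hD : (a + b) * D ≠ ∞)]
    calc
      p + v + u + D + (a + b) * D = p + v + (u + (a + b + 1) * D) := by ring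
      _ ≤ p' + a * D + (v' + b * D) + (u + c * D) := by gcongr
      _ ≤ p' + a * D + (v' + b * D) + u' := by gcongr
      _ = p' + v' + u' + (a + b) * D := by ring

variable [NeZero n]

theorem totalEnergy_ball_ne_top (hα : 0 < α) (hαn : α ≤ n) (hβ : 0 ≤ β) (hA : 0 ≤ A) {R : ℝ}
    (hR : 0 < R) : totalEnergy α β A (ball (0 : EuclideanSpace ℝ (Fin n)) R) ≠ ∞ :=
  ENNReal.add_ne_top.2 ⟨ENNReal.add_ne_top.2
    ⟨perimeter_ball_ne_top hR, rieszEnergy_ball_ne_top hα hαn hR⟩, potEnergy_ball_ne_top hβ hA R⟩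

theorem exists_forall_gt_totalEnergy_ball_add_le (hα1 : 1 < α) (hαn : α < n) (hA : 0 < A)
    (hαβ : α < β) : ∃ R₀ : ℝ, 1 ≤ R₀ ∧ ∀ R : ℝ, R₀ < R →
      ∀ E : Set (EuclideanSpace ℝ (Fin n)), MeasurableSet E →
        volume E = volume (ball (0 : EuclideanSpace ℝ (Fin n)) R) →
        totalEnergy α β A (ball (0 : EuclideanSpace ℝ (Fin n)) R) + radialAsymmetry R E ≤
          totalEnergy α β A E := by
  obtain ⟨C₁, hC₁, hP⟩ := exists_perimeter_ball_le (n := n)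
  obtain ⟨C₂, hC₂, hV⟩ := exists_rieszEnergy_ball_le hα1 hαn
  obtain ⟨R₀, hR₀, h_dom⟩ := exists_forall_gt_div_sq_add_mul_rpow_le hα1.le hαβ hA hC₁
  refine ⟨R₀, hR₀, fun R hR E hE hER => ?_⟩
  have hR0 : 0 < R := by linarith
  refine add_le_of_add_mul_le_of_add_add_one_le (hP R hR0 E hE hER) (hV R hR0 E hE hER)
    (potEnergy_ball_add_le (by linarith) hA.le hR0 hE hER) ofReal_ne_top ofReal_ne_top ?_
  rw [← ENNReal.ofReal_one, ← ENNReal.ofReal_add (by positivity) (by positivity),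
    ← ENNReal.ofReal_add (by positivity) (by positivity)]
  exact ENNReal.ofReal_le_ofReal (h_dom R hR)

theorem exists_forall_gt_ballOfVolume_eq (n : ℕ) [NeZero n] {R₀ : ℝ} (hR₀ : 0 < R₀) :
    ∃ m₁ : ℝ, 0 < m₁ ∧ ∀ m, m₁ < m → ∃ R, R₀ < R ∧ ballOfVolume n m = ball 0 R ∧
      volume (ball (0 : EuclideanSpace ℝ (Fin n)) R) = ENNReal.ofReal m := by
  have hω_top : volume (unitBall n) ≠ ∞ := measure_ball_lt_top.ne
  have hω_zero : volume (unitBall n) ≠ 0 := (measure_ball_pos _ _ one_pos).ne'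
  have hω : 0 < (volume (unitBall n)).toReal := ENNReal.toReal_pos hω_zero hω_top
  refine ⟨(volume (unitBall n)).toReal * R₀ ^ n, by positivity, fun m hm => ⟨_, ?_, rfl, ?_⟩⟩
  all_goals have hm0 : 0 < m := lt_trans (by positivity) hm
  · rw [one_div, Real.lt_rpow_inv_iff_of_pos hR₀.le (div_pos hm0 hω).le
      (Nat.cast_pos.2 (NeZero.pos n)), Real.rpow_natCast, lt_div_iff₀' hω]
    exact hm
  · rw [Measure.addHaar_ball_of_pos _ _ (Real.rpow_pos_of_pos (div_pos hm0 hω) _),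
      finrank_euclideanSpace_fin, one_div,
      Real.rpow_inv_natCast_pow (div_pos hm0 hω).le (NeZero.ne n), ← unitBall,
      ENNReal.ofReal_div_of_pos hω, ENNReal.ofReal_toReal hω_top,
      ENNReal.div_mul_cancel hω_zero hω_top]

end TotalEnergy

/-- For `1 < α < n` and `α < β`, there is `m₁ > 0` such that for every `m > m₁` the ball
of volume `m` centered at the origin is the unique minimizer at mass `m`. -/
theorem statement2 (n : ℕ) (hn : 2 ≤ n) (α β A : ℝ)
    (hα1 : 1 < α) (hαn : α < n) (hβ : 0 < β) (hA : 0 < A) (hαβ : α < β) :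
    ∃ m₁ : ℝ, 0 < m₁ ∧ ∀ m, m₁ < m →
      IsMinimizer α β A m (ballOfVolume n m) ∧
      ∀ E : Set (EuclideanSpace ℝ (Fin n)), IsMinimizer α β A m E →
        volume (symmDiff E (ballOfVolume n m)) = 0 := by
  have : NeZero n := ⟨by lia⟩
  obtain ⟨R₀, hR₀, h_stable⟩ := exists_forall_gt_totalEnergy_ball_add_le hα1 hαn hA hαβ
  obtain ⟨m₁, hm₁, h_ball⟩ := exists_forall_gt_ballOfVolume_eq n (one_pos.trans_le hR₀)
  refine ⟨m₁, hm₁, fun m hm => ?_⟩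
  obtain ⟨R, hR, hBR, hRm⟩ := h_ball m hm
  have hR0 : 0 < R := by linarith
  rw [hBR]
  refine ⟨⟨measurableSet_ball, hRm, fun F hF hFm =>
    le_self_add.trans (h_stable R hR F hF (hFm.trans hRm.symm))⟩, fun E ⟨hE, hEm, hE_min⟩ => ?_⟩
  have h_le := (h_stable R hR E hE (hEm.trans hRm.symm)).trans (hE_min _ measurableSet_ball hRm)
  have h_fin := totalEnergy_ball_ne_top (by linarith) hαn.le hβ.le hA.le hR0
  have h_asymmetry : radialAsymmetry R E = 0 := by
    refine nonpos_iff_eq_zero.1 ((ENNReal.add_le_add_iff_left h_fin).1 ?_)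
    rwa [add_zero]
  exact volume_symmDiff_ball_eq_zero_of_radialAsymmetry_eq_zero hR0.ne' h_asymmetry
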